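/- Let n and k be positive integers with k ≡ 2 (mod 3), k ≥ 3 and n ≥ k+3, and let G be a potted graph of order n whose cycle has length k. Set x₁ = k·3^{(n−k−1)/3−1} + (k+1)/3, x₂ = (k+1)·3^{(n−k−1)/3−1} + 1, x₃ = k·3^{(n−k)/3−1} + (1/3)(k+1)·((n−k)/3 + 1) + 1 and x₄ = (k+1)·3^{(n−k)/3−1} + (n+k−1)/3. Then: if n ≡ 0 (mod 3), m(G) ≤ max{x₁, x₂}; if n ≡ 1 (mod 3), m(G) ≤ (k+1)·3^{(n−k−2)/3−1}; if n ≡ 2 (mod 3), m(G) ≤ max{x₃, x₄}. -/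

import Mathlib

open scoped Classical

variable {V : Type*}

/-- The number of neighbors of `v` that lie inside the finite set `s`,
i.e. the degree of `v` in the subgraph induced by `s` (when `v ∈ s`). -/
noncomputable def nbrCount (G : SimpleGraph V) (s : Finset V) (v : V) : ℕ :=
  {w ∈ (s : Set V) | G.Adj v w}.ncard

/-- `s` is a dissociation set of `G`: the subgraph induced by `s` has maximum degree at most 1. -/
def IsDissoc (G : SimpleGraph V) (s : Finset V) : Prop :=
  ∀ v ∈ s, nbrCount G s v ≤ 1

/-- The dissociation number of the subgraph of `G` induced by `A`. -/
noncomputable def dissNumOn (G : SimpleGraph V) (A : Set V) : ℕ :=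
  sSup {n | ∃ s : Finset V, ↑s ⊆ A ∧ IsDissoc G s ∧ s.card = n}

/-- `s` is a maximum dissociation set of the subgraph of `G` induced by `A`. -/
def IsMaxDissocOn (G : SimpleGraph V) (A : Set V) (s : Finset V) : Prop :=
  ↑s ⊆ A ∧ IsDissoc G s ∧ s.card = dissNumOn G A

/-- The number of maximum dissociation sets of the subgraph of `G` induced by `A`. -/
noncomputable def numMaxDissocOn (G : SimpleGraph V) (A : Set V) : ℕ :=
  Nat.card {s : Finset V // IsMaxDissocOn G A s}

/-- The dissociation number of `G`. -/
noncomputable def dissNum (G : SimpleGraph V) : ℕ :=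
  dissNumOn G Set.univ

/-- `s` is a maximum dissociation set of `G`. -/
def IsMaxDissoc (G : SimpleGraph V) (s : Finset V) : Prop :=
  IsMaxDissocOn G Set.univ s

/-- The number `m(G)` of maximum dissociation sets of `G`. -/
noncomputable def numMaxDissoc (G : SimpleGraph V) : ℕ :=
  numMaxDissocOn G Set.univ

/-- `m(G[A], u⁻)`: maximum dissociation sets of `G[A]` not containing `u`. -/
noncomputable def numMaxDissocOnAway (G : SimpleGraph V) (A : Set V) (u : V) : ℕ :=
  Nat.card {s : Finset V // IsMaxDissocOn G A s ∧ u ∉ s}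

/-- `m(G[A], u⁰)`: maximum dissociation sets of `G[A]` containing `u` with induced degree 0. -/
noncomputable def numMaxDissocOnDeg0 (G : SimpleGraph V) (A : Set V) (u : V) : ℕ :=
  Nat.card {s : Finset V // IsMaxDissocOn G A s ∧ u ∈ s ∧ nbrCount G s u = 0}

/-- `m(G[A], u¹)`: maximum dissociation sets of `G[A]` containing `u` with induced degree 1. -/
noncomputable def numMaxDissocOnDeg1 (G : SimpleGraph V) (A : Set V) (u : V) : ℕ :=
  Nat.card {s : Finset V // IsMaxDissocOn G A s ∧ u ∈ s ∧ nbrCount G s u = 1}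

/-- `m(G, u⁻)`. -/
noncomputable def numMaxDissocAway (G : SimpleGraph V) (u : V) : ℕ :=
  numMaxDissocOnAway G Set.univ u

/-- `m(G, u⁰)`. -/
noncomputable def numMaxDissocDeg0 (G : SimpleGraph V) (u : V) : ℕ :=
  numMaxDissocOnDeg0 G Set.univ u

/-- `m(G, u¹)`. -/
noncomputable def numMaxDissocDeg1 (G : SimpleGraph V) (u : V) : ℕ :=
  numMaxDissocOnDeg1 G Set.univ u

/-- `m̄`: relative count, `numMaxDissocOn G B` if `dissNumOn G B = dissNumOn G A`, else 0. -/
noncomputable def mbar (G : SimpleGraph V) (A B : Set V) : ℕ :=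
  if dissNumOn G B = dissNumOn G A then numMaxDissocOn G B else 0

/-- `G` is a potted graph whose (unique) cycle has length `k`: `G` is connected and unicyclic
(equivalently, connected with as many edges as vertices), and its cycle has length `k` and
contains a unique vertex of degree larger than 2. -/
def IsPotted (G : SimpleGraph V) (k : ℕ) : Prop :=
  G.Connected ∧ G.edgeSet.ncard = Nat.card V ∧
    ∃ (v : V) (c : G.Walk v v), c.IsCycle ∧ c.length = k ∧
      ∃! u, u ∈ c.support ∧ 2 < (G.neighborSet u).ncard

/-
Maximum dissociation sets are the complements of minimum `P₃`-covers, i.e. of minimum vertex sets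
meeting every path on three vertices. A cycle of length `3 * j + 2` has at most `3 * j + 2` minimum
covers, all of them progressions with step 3; at most `j + 1` of them contain the root `u`, and at
most one leaves `u` isolated.

From the forest hanging off the cycle one repeatedly splits off the subtree below a deepest vertex
with at least two descendants. Every minimum cover meets such a subtree in exactly one vertex,
for which there are at most 3 choices if the subtree has three vertices (a cherry), at most 2 if it
has four (a quad), and at most 1 otherwise. When no such subtree is left, either the cycle remains,
or the cycle with a pendant vertex at `u`, or deleting `u` is forced. The residue of `n - k` modulo
3 bounds the number of vertices that do not lie in cherries, which leaves few shapes to consider.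
In these, an edge between a cherry and the rest restricts the choice inside the cherry to its
endpoint unless the other endpoint of the edge is deleted or isolated. The second term of each
maximum arises when all cherries hang directly from `u`, so that deleting `u` frees them all.
-/

section Covers

open Finset

variable {G : SimpleGraph V} {A B S D : Finset V} {s v x y : V}

lemma isDissoc_iff : IsDissoc G S ↔
    ∀ v ∈ S, ∀ a ∈ S, ∀ b ∈ S, G.Adj v a → G.Adj v b → a = b := by
  refine forall₂_congr fun v _ ↦ ?_
  rw [nbrCount, Set.ncard_le_one (S.finite_toSet.subset fun w hw ↦ hw.1)]
  exact ⟨fun h a ha b hb hva hvb ↦ h a ⟨ha, hva⟩ b ⟨hb, hvb⟩,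
    fun h a ha b hb ↦ h a ha.1 b hb.1 ha.2 hb.2⟩

lemma IsDissoc.mono (hB : IsDissoc G B) (hAB : A ⊆ B) : IsDissoc G A :=
  isDissoc_iff.2 fun v hv a ha b hb ↦
    isDissoc_iff.1 hB v (hAB hv) a (hAB ha) b (hAB hb)

/-- `v` is an isolated vertex of the subgraph of `G` induced by `B`. -/
def IsolatedIn (G : SimpleGraph V) (B : Finset V) (v : V) : Prop :=
  v ∈ B ∧ ∀ w ∈ B, ¬G.Adj v w

lemma IsolatedIn.mono (hv : IsolatedIn G B v) (hAB : A ⊆ B) (hvA : v ∈ A) : IsolatedIn G A v :=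
  ⟨hvA, fun w hw ↦ hv.2 w (hAB hw)⟩

lemma IsDissoc.isolatedIn_of_adj (hB : IsDissoc G B) (hAB : A ⊆ B) (hx : x ∈ A) (hy : y ∈ B)
    (hyA : y ∉ A) (hxy : G.Adj x y) : IsolatedIn G A x :=
  ⟨hx, fun w hw hxw ↦
    hyA (isDissoc_iff.1 hB x (hAB hx) w (hAB hw) y hy hxw hxy ▸ hw)⟩

/-- The minimum `P₃`-covers of the subgraph of `G` induced by `A`, that is, the complements in `A`
of its maximum dissociation sets. -/
noncomputable def minP3Covers (G : SimpleGraph V) (A : Finset V) : Finset (Finset V) :=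
  {D ∈ A.powerset | IsDissoc G (A \ D) ∧ ∀ E ⊆ A, IsDissoc G (A \ E) → #D ≤ #E}

lemma mem_minP3Covers : D ∈ minP3Covers G A ↔
    D ⊆ A ∧ IsDissoc G (A \ D) ∧ ∀ E ⊆ A, IsDissoc G (A \ E) → #D ≤ #E := by
  simp [minP3Covers]

lemma subset_of_mem_minP3Covers (hD : D ∈ minP3Covers G A) : D ⊆ A := (mem_minP3Covers.1 hD).1

lemma isDissoc_sdiff_of_mem_minP3Covers (hD : D ∈ minP3Covers G A) : IsDissoc G (A \ D) :=
  (mem_minP3Covers.1 hD).2.1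

lemma numMaxDissoc_le_card_minP3Covers [Fintype V] (G : SimpleGraph V) :
    numMaxDissoc G ≤ #(minP3Covers G univ) := by
  have hbdd : BddAbove {n | ∃ s : Finset V, (s : Set V) ⊆ Set.univ ∧ IsDissoc G s ∧ #s = n} :=
    ⟨Fintype.card V, by rintro n ⟨s, -, -, rfl⟩; exact card_le_univ s⟩
  have compl_mem (s : Finset V) (hs : IsMaxDissoc G s) : sᶜ ∈ minP3Covers G univ := by
    obtain ⟨-, hdiss, hcard⟩ := hs
    refine mem_minP3Covers.2 ⟨subset_univ _, ?_, fun E _ hE ↦ ?_⟩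
    · rwa [← compl_eq_univ_sdiff, compl_compl]
    · rw [← compl_eq_univ_sdiff] at hE
      have hle : #Eᶜ ≤ dissNumOn G Set.univ := le_csSup hbdd ⟨Eᶜ, Set.subset_univ _, hE, rfl⟩
      have hs := card_add_card_compl s
      have hE := card_add_card_compl E
      lia
  have hinj := Nat.card_le_card_of_injective
    (fun s : {s : Finset V // IsMaxDissoc G s} ↦
      (⟨s.1ᶜ, compl_mem s.1 s.2⟩ : minP3Covers G univ))
    fun s t hst ↦ Subtype.ext (compl_injective (congrArg Subtype.val hst))
  rwa [Nat.card_eq_fintype_card (α := minP3Covers G univ), Fintype.card_coe] at hinj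

/-- The minimum `P₃`-covers `D` of `G[A]` such that `p D`. -/
noncomputable def minP3CoversWith (G : SimpleGraph V) (A : Finset V) (p : Finset V → Prop) :
    Finset (Finset V) :=
  {D ∈ minP3Covers G A | p D}

/-- The number of minimum `P₃`-covers `D` of `G[A]` such that `p D`. -/
noncomputable def coverCount (G : SimpleGraph V) (A : Finset V) (p : Finset V → Prop) : ℕ :=
  #(minP3CoversWith G A p)

variable {p q : Finset V → Prop}

lemma mem_minP3CoversWith : D ∈ minP3CoversWith G A p ↔ D ∈ minP3Covers G A ∧ p D :=
  mem_filter

lemma coverCount_true : coverCount G A (fun _ ↦ True) = #(minP3Covers G A) := by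
  refine congrArg card (ext fun D ↦ ?_)
  simp only [mem_minP3CoversWith, and_true]

lemma coverCount_mono (h : ∀ D ∈ minP3Covers G A, p D → q D) :
    coverCount G A p ≤ coverCount G A q := by
  refine card_le_card fun D hD ↦ ?_
  rw [mem_minP3CoversWith] at hD ⊢
  exact ⟨hD.1, h D hD.1 hD.2⟩

lemma coverCount_eq_zero (h : ∀ D ∈ minP3Covers G A, ¬p D) : coverCount G A p = 0 :=
  card_eq_zero.2 (filter_eq_empty_iff.2 fun D hD ↦ h D hD)

lemma coverCount_or_le :
    coverCount G A (fun D ↦ p D ∨ q D) ≤ coverCount G A p + coverCount G A q := by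
  refine (card_le_card fun D hD ↦ ?_).trans (card_union_le _ _)
  simp only [mem_minP3CoversWith, mem_union] at hD ⊢
  tauto

/-- Deleting `D` from `G[A]` leaves room for a new neighbour of `v`: a pendant vertex attached to
`v` can be kept exactly when `v` is deleted or isolated. -/
def AdmitsNbr (G : SimpleGraph V) (A D : Finset V) (v : V) : Prop :=
  v ∈ D ∨ IsolatedIn G (A \ D) v

lemma coverCount_admitsNbr (G : SimpleGraph V) (A : Finset V) (v : V) :
    coverCount G A (AdmitsNbr G A · v) =
      coverCount G A (v ∈ ·) + coverCount G A (fun D ↦ IsolatedIn G (A \ D) v) := by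
  refine coverCount_or_le.antisymm ?_
  rw [coverCount, coverCount, ← card_union_of_disjoint]
  · refine card_le_card fun D hD ↦ ?_
    simp only [mem_minP3CoversWith, mem_union] at hD ⊢
    tauto
  · refine disjoint_left.2 fun D hD hD' ↦ ?_
    rw [mem_minP3CoversWith] at hD hD'
    exact (mem_sdiff.1 hD'.2.1).2 hD.2

lemma AdmitsNbr.inter (h : AdmitsNbr G B D v) (hAB : A ⊆ B) (hv : v ∈ A) :
    AdmitsNbr G A (D ∩ A) v := by
  by_cases hvD : v ∈ D
  · exact .inl (mem_inter.2 ⟨hvD, hv⟩)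
  · rw [AdmitsNbr, sdiff_inter_self_right]
    exact .inr ((h.resolve_left hvD).mono (sdiff_subset_sdiff hAB le_rfl)
      (mem_sdiff.2 ⟨hv, hvD⟩))

/-- The vertices that on their own form a `P₃`-cover of `G[S]`. -/
noncomputable def coverVertices (G : SimpleGraph V) (S : Finset V) : Finset V :=
  {s ∈ S | IsDissoc G (S.erase s)}

lemma coverVertices_subset (G : SimpleGraph V) (S : Finset V) : coverVertices G S ⊆ S :=
  filter_subset _ _

/-- The cover vertices `s` of `G[S]` that leave room for a new neighbour of `w`, in the sense of
`AdmitsNbr`. -/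
noncomputable def admittingVertices (G : SimpleGraph V) (S : Finset V) (w : V) : Finset V :=
  {s ∈ coverVertices G S | s = w ∨ IsolatedIn G (S.erase s) w}

lemma mem_iff_eq_of_inter_eq (hs : D ∩ S = {s}) (hv : v ∈ S) : v ∈ D ↔ v = s := by
  rw [← mem_singleton, ← hs, mem_inter, and_iff_left hv]

lemma AdmitsNbr.mem_admittingVertices (h : AdmitsNbr G B D v) (hSB : S ⊆ B) (hv : v ∈ S)
    (hs : D ∩ S = {s}) (hsS : s ∈ coverVertices G S) : s ∈ admittingVertices G S v := by
  refine mem_filter.2 ⟨hsS, ?_⟩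
  have h := h.inter hSB hv
  rwa [AdmitsNbr, hs, mem_singleton, eq_comm, sdiff_singleton_eq_erase] at h

end Covers

section Attaching

open Finset

/-- `S` hangs on `A` by the single edge `xy`, and deleting one vertex of `S` is necessary and, if
that vertex is `x`, sufficient for `G[S]`. -/
structure AttachedAt (G : SimpleGraph V) (A S : Finset V) (x y : V) : Prop where
  disjoint : Disjoint A S
  mem_left : x ∈ S
  mem_right : y ∈ A
  adj : G.Adj x y
  eq_of_adj : ∀ a ∈ A, ∀ b ∈ S, G.Adj a b → a = y ∧ b = x
  isDissoc_erase : IsDissoc G (S.erase x)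
  not_isDissoc : ¬IsDissoc G S

namespace AttachedAt

variable {G : SimpleGraph V} {A S D E : Finset V} {s x y : V}

lemma left_mem_coverVertices (h : AttachedAt G A S x y) : x ∈ coverVertices G S :=
  mem_filter.2 ⟨h.mem_left, h.isDissoc_erase⟩

lemma isDissoc_union_sdiff_insert (h : AttachedAt G A S x y) (hE : IsDissoc G (A \ E)) :
    IsDissoc G ((A ∪ S) \ insert x E) := by
  have no_cross {a b : V} (ha : a ∈ A) (hb : b ∈ S) (hbx : b ≠ x) : ¬G.Adj a b :=
    fun hab ↦ hbx (h.eq_of_adj a ha b hb hab).2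
  refine isDissoc_iff.2 fun v hv a ha b hb hva hvb ↦ ?_
  simp only [mem_sdiff, mem_union, mem_insert, not_or] at hv ha hb
  rcases hv.1 with hvA | hvS
  · have haA := ha.1.resolve_right fun haS ↦ no_cross hvA haS ha.2.1 hva
    have hbA := hb.1.resolve_right fun hbS ↦ no_cross hvA hbS hb.2.1 hvb
    exact isDissoc_iff.1 hE v (mem_sdiff.2 ⟨hvA, hv.2.2⟩) a (mem_sdiff.2 ⟨haA, ha.2.2⟩) b
      (mem_sdiff.2 ⟨hbA, hb.2.2⟩) hva hvb
  · have haS := ha.1.resolve_left fun haA ↦ no_cross haA hvS hv.2.1 hva.symm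
    have hbS := hb.1.resolve_left fun hbA ↦ no_cross hbA hvS hv.2.1 hvb.symm
    exact isDissoc_iff.1 h.isDissoc_erase v (mem_erase.2 ⟨hv.2.1, hvS⟩) a
      (mem_erase.2 ⟨ha.2.1, haS⟩) b (mem_erase.2 ⟨hb.2.1, hbS⟩) hva hvb

lemma card_le_card_add_one (h : AttachedAt G A S x y) (hD : D ∈ minP3Covers G (A ∪ S))
    (hEA : E ⊆ A) (hE : IsDissoc G (A \ E)) : #D ≤ #E + 1 :=
  ((mem_minP3Covers.1 hD).2.2 _
    (insert_subset (mem_union_right _ h.mem_left) (hEA.trans subset_union_left))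
    (h.isDissoc_union_sdiff_insert hE)).trans (card_insert_le _ _)

-- One vertex of `S` must be deleted, and one suffices: `x`.
lemma inter_mem_minP3Covers (h : AttachedAt G A S x y) (hD : D ∈ minP3Covers G (A ∪ S)) :
    D ∩ A ∈ minP3Covers G A ∧ ∃ s ∈ coverVertices G S, D ∩ S = {s} := by
  obtain ⟨hDsub, hDdiss, -⟩ := mem_minP3Covers.1 hD
  have hDA : IsDissoc G (A \ (D ∩ A)) := hDdiss.mono <| by
    rw [sdiff_inter_self_right]; exact sdiff_subset_sdiff subset_union_left le_rfl
  have hDS : IsDissoc G (S \ (D ∩ S)) := hDdiss.mono <| by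
    rw [sdiff_inter_self_right]; exact sdiff_subset_sdiff subset_union_right le_rfl
  have hcard : #D = #(D ∩ A) + #(D ∩ S) := by
    rw [← card_union_of_disjoint (h.disjoint.mono inter_subset_right inter_subset_right),
      ← inter_union_distrib_left, inter_eq_left.2 hDsub]
  have hpos : 0 < #(D ∩ S) := by
    refine card_pos.2 (nonempty_iff_ne_empty.2 fun hempty ↦ h.not_isDissoc ?_)
    rwa [hempty, sdiff_empty] at hDS
  have hle : #(D ∩ S) ≤ 1 := by
    have := h.card_le_card_add_one hD inter_subset_right hDA
    lia
  obtain ⟨s, hs⟩ := card_eq_one.1 (hle.antisymm hpos)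
  have hsS : s ∈ S := (mem_inter.1 (hs ▸ mem_singleton_self s : s ∈ D ∩ S)).2
  refine ⟨mem_minP3Covers.2 ⟨inter_subset_right, hDA, fun E hEA hE ↦ ?_⟩,
    s, mem_filter.2 ⟨hsS, ?_⟩, hs⟩
  · have := h.card_le_card_add_one hD hEA hE
    lia
  · rwa [hs, sdiff_singleton_eq_erase] at hDS

end AttachedAt

end Attaching

section Clusters

open Finset

variable {G : SimpleGraph V} {A S D : Finset V} {p q : Finset V → Prop} {s v x y : V}

namespace AttachedAt

lemma left_notMem (h : AttachedAt G A S x y) : x ∉ A :=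
  fun hx ↦ disjoint_left.1 h.disjoint hx h.mem_left

lemma right_notMem (h : AttachedAt G A S x y) : y ∉ S :=
  disjoint_left.1 h.disjoint h.mem_right

lemma admitsNbr_right (h : AttachedAt G A S x y) (hD : D ∈ minP3Covers G (A ∪ S))
    (hs : D ∩ S = {s}) (hsx : s ≠ x) : AdmitsNbr G A (D ∩ A) y := by
  by_cases hy : y ∈ D
  · exact .inl (mem_inter.2 ⟨hy, h.mem_right⟩)
  have hx : x ∉ D := fun hx ↦ hsx ((mem_iff_eq_of_inter_eq hs h.mem_left).1 hx).symm
  rw [AdmitsNbr, sdiff_inter_self_right]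
  exact .inr <| (isDissoc_sdiff_of_mem_minP3Covers hD).isolatedIn_of_adj
    (sdiff_subset_sdiff subset_union_left le_rfl) (mem_sdiff.2 ⟨h.mem_right, hy⟩)
    (mem_sdiff.2 ⟨mem_union_right _ h.mem_left, hx⟩)
    (fun hx' ↦ h.left_notMem (mem_sdiff.1 hx').1) h.adj.symm

lemma mem_coverVertices_of_inter_eq (h : AttachedAt G A S x y) (hD : D ∈ minP3Covers G (A ∪ S))
    (hs : D ∩ S = {s}) : s ∈ coverVertices G S := by
  obtain ⟨t, ht, hDt⟩ := (h.inter_mem_minP3Covers hD).2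
  exact singleton_injective (hs.symm.trans hDt) ▸ ht

lemma right_mem_of_notMem_admittingVertices (h : AttachedAt G A S x y)
    (hD : D ∈ minP3Covers G (A ∪ S)) (hs : D ∩ S = {s})
    (hsx : s ∉ admittingVertices G S x) : y ∈ D ∩ A := by
  have hsS := h.mem_coverVertices_of_inter_eq hD hs
  refine mem_inter.2 ⟨by_contra fun hy ↦ hsx ?_, h.mem_right⟩
  by_cases hx : x ∈ D
  · exact mem_filter.2 ⟨hsS, .inl ((mem_iff_eq_of_inter_eq hs h.mem_left).1 hx).symm⟩
  refine AdmitsNbr.mem_admittingVertices (B := S) (D := D) (.inr ?_) le_rfl h.mem_left hs hsS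
  exact (isDissoc_sdiff_of_mem_minP3Covers hD).isolatedIn_of_adj
    (sdiff_subset_sdiff subset_union_right le_rfl) (mem_sdiff.2 ⟨h.mem_left, hx⟩)
    (mem_sdiff.2 ⟨mem_union_left _ h.mem_right, hy⟩)
    (fun hy' ↦ h.right_notMem (mem_sdiff.1 hy').1) h.adj

lemma coverCount_union_le (h : AttachedAt G A S x y) (s : V)
    (hpq : ∀ D ∈ minP3Covers G (A ∪ S), p D → D ∩ S = {s} ∧ q (D ∩ A)) :
    coverCount G (A ∪ S) p ≤ coverCount G A q := by
  refine card_le_card_of_injOn (· ∩ A) (fun D hD ↦ ?_) fun D hD E hE hDE ↦ ?_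
  · have ⟨hD, hp⟩ := mem_minP3CoversWith.1 hD
    exact mem_minP3CoversWith.2 ⟨(h.inter_mem_minP3Covers hD).1, (hpq D hD hp).2⟩
  · have ⟨hD, hpD⟩ := mem_minP3CoversWith.1 hD
    have ⟨hE, hpE⟩ := mem_minP3CoversWith.1 hE
    rw [← inter_eq_left.2 (subset_of_mem_minP3Covers hD),
      ← inter_eq_left.2 (subset_of_mem_minP3Covers hE), inter_union_distrib_left,
      inter_union_distrib_left, (hpq D hD hpD).1, (hpq E hE hpE).1]
    exact congrArg (· ∪ {s}) hDE

lemma coverCount_union_le_sum (h : AttachedAt G A S x y) (p : Finset V → Prop) :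
    coverCount G (A ∪ S) p ≤
      ∑ s ∈ coverVertices G S, coverCount G (A ∪ S) fun D ↦ p D ∧ D ∩ S = {s} := by
  refine (card_le_card fun D hD ↦ ?_).trans card_biUnion_le
  have ⟨hD, hp⟩ := mem_minP3CoversWith.1 hD
  obtain ⟨s, hs, hDs⟩ := (h.inter_mem_minP3Covers hD).2
  exact mem_biUnion.2 ⟨s, hs, mem_minP3CoversWith.2 ⟨hD, hp, hDs⟩⟩

end AttachedAt

/-- `G[S]` is a graph on three vertices with a vertex adjacent to the other two. -/
def IsCherry (G : SimpleGraph V) (S : Finset V) : Prop :=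
  #S = 3 ∧ ∃ c ∈ S, ∀ a ∈ S, a ≠ c → G.Adj c a

/-- A cluster on four vertices with the properties of the path `P₄` that matter for counting. -/
def IsQuad (G : SimpleGraph V) (S : Finset V) : Prop :=
  #S = 4 ∧ #(coverVertices G S) ≤ 2 ∧ ∀ w ∈ S, #(admittingVertices G S w) ≤ 1

/-- A cluster on at least five vertices that has at most one cover vertex. -/
def IsLargeCluster (G : SimpleGraph V) (S : Finset V) : Prop :=
  5 ≤ #S ∧ #(coverVertices G S) ≤ 1

/-- The three shapes of the pieces that are peeled off. -/
def IsCluster (G : SimpleGraph V) (S : Finset V) : Prop :=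
  IsCherry G S ∨ IsQuad G S ∨ IsLargeCluster G S

lemma IsCherry.card_coverVertices_le (h : IsCherry G S) : #(coverVertices G S) ≤ 3 :=
  (card_le_card (coverVertices_subset G S)).trans h.1.le

lemma IsCherry.exists_admittingVertices_subset (h : IsCherry G S) :
    ∃ c ∈ S, ∀ w ∈ S, admittingVertices G S w ⊆ {w, c} := by
  obtain ⟨hcard, c, hc, hadj⟩ := h
  refine ⟨c, hc, fun w hw s hs ↦ ?_⟩
  obtain ⟨hsS, rfl | hiso⟩ := mem_filter.1 hs
  · exact mem_insert_self _ _
  by_contra hsw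
  simp only [mem_insert, mem_singleton, not_or] at hsw
  obtain rfl | hwc := eq_or_ne w c
  · obtain ⟨a, ha⟩ : ((S.erase s).erase w).Nonempty := card_pos.1 <| by
      rw [card_erase_of_mem (mem_erase.2 ⟨Ne.symm hsw.1, hw⟩),
        card_erase_of_mem (coverVertices_subset G S hsS), hcard]
      norm_num
    obtain ⟨haw, ha⟩ := mem_erase.1 ha
    exact hiso.2 a ha (hadj a (mem_of_mem_erase ha) haw)
  · exact hiso.2 c (mem_erase.2 ⟨Ne.symm hsw.2, hc⟩) (hadj w hw hwc).symm

namespace AttachedAt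

lemma coverCount_union_le_of_isCherry (h : AttachedAt G A S x y) (hS : IsCherry G S)
    (hpq : ∀ D ∈ minP3Covers G (A ∪ S), p D → q (D ∩ A)) :
    coverCount G (A ∪ S) p ≤ coverCount G A q + coverCount G A (fun D ↦ q D ∧ y ∈ D) +
      coverCount G A (fun D ↦ q D ∧ AdmitsNbr G A D y) := by
  obtain ⟨c, -, hc⟩ := hS.exists_admittingVertices_subset
  obtain ⟨s, t, hst, hstx⟩ : ∃ s t, s ≠ t ∧ S.erase x = {s, t} :=
    card_eq_two.1 (by rw [card_erase_of_mem h.mem_left, hS.1])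
  set f : V → ℕ := fun s ↦ coverCount G (A ∪ S) fun D ↦ p D ∧ D ∩ S = {s}
  have f_left : f x ≤ coverCount G A q :=
    h.coverCount_union_le x fun D hD hDs ↦ ⟨hDs.2, hpq D hD hDs.1⟩
  have f_le {s : V} (hsx : s ≠ x) : f s ≤ coverCount G A fun D ↦ q D ∧ AdmitsNbr G A D y :=
    h.coverCount_union_le s fun D hD hDs ↦
      ⟨hDs.2, hpq D hD hDs.1, h.admitsNbr_right hD hDs.2 hsx⟩
  have f_le_of_ne {s : V} (hsx : s ≠ x) (hsc : s ≠ c) :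
      f s ≤ coverCount G A fun D ↦ q D ∧ y ∈ D := by
    refine h.coverCount_union_le s fun D hD hDs ↦ ⟨hDs.2, hpq D hD hDs.1, ?_⟩
    refine h.right_mem_of_notMem_admittingVertices hD hDs.2 fun hmem ↦ ?_
    simpa [hsx, hsc] using hc x h.mem_left hmem
  have hsx : s ≠ x := ne_of_mem_erase (by rw [hstx]; exact mem_insert_self _ _)
  have htx : t ≠ x := ne_of_mem_erase (by rw [hstx]; exact mem_insert_of_mem (mem_singleton_self _))
  have hsum : f s + f t ≤ coverCount G A (fun D ↦ q D ∧ y ∈ D) +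
      coverCount G A (fun D ↦ q D ∧ AdmitsNbr G A D y) := by
    obtain rfl | hsc := eq_or_ne s c
    · rw [add_comm]; exact add_le_add (f_le_of_ne htx hst.symm) (f_le hsx)
    · exact add_le_add (f_le_of_ne hsx hsc) (f_le htx)
  calc coverCount G (A ∪ S) p ≤ ∑ s ∈ S, f s := (h.coverCount_union_le_sum p).trans
        (sum_le_sum_of_subset (coverVertices_subset G S))
    _ = f x + (f s + f t) := by rw [← add_sum_erase _ _ h.mem_left, hstx, sum_pair hst]
    _ ≤ _ := by rw [add_assoc]; exact add_le_add f_left hsum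

lemma card_minP3Covers_union_le_of_isQuad (h : AttachedAt G A S x y) (hS : IsQuad G S) :
    #(minP3Covers G (A ∪ S)) ≤ #(minP3Covers G A) + coverCount G A (y ∈ ·) := by
  have hx : x ∈ admittingVertices G S x := mem_filter.2 ⟨h.left_mem_coverVertices, .inl rfl⟩
  have f_le {s : V} (hs : s ∈ (coverVertices G S).erase x) :
      coverCount G (A ∪ S) (fun D ↦ True ∧ D ∩ S = {s}) ≤ coverCount G A (y ∈ ·) :=
    h.coverCount_union_le s fun D hD hDs ↦ ⟨hDs.2,
      h.right_mem_of_notMem_admittingVertices hD hDs.2 fun hsx ↦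
        ne_of_mem_erase hs (card_le_one.1 (hS.2.2 x h.mem_left) s hsx x hx)⟩
  have hcard : #((coverVertices G S).erase x) ≤ 1 := by
    rw [card_erase_of_mem h.left_mem_coverVertices]
    exact Nat.sub_le_sub_right hS.2.1 1
  rw [← coverCount_true]
  refine (h.coverCount_union_le_sum _).trans ?_
  rw [← add_sum_erase _ _ h.left_mem_coverVertices]
  refine add_le_add ?_ ?_
  · rw [← coverCount_true]
    exact h.coverCount_union_le x fun D _ hDx ↦ ⟨hDx.2, trivial⟩
  · exact (sum_le_card_nsmul _ _ _ fun s hs ↦ f_le hs).trans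
      (mul_le_of_le_one_left' hcard)

lemma coverCount_admitsNbr_union_le_of_isCherry (h : AttachedAt G A S x y) (hS : IsCherry G S)
    (hv : v ∈ S) : coverCount G (A ∪ S) (AdmitsNbr G (A ∪ S) · v) ≤
      #(minP3Covers G A) + coverCount G A (y ∈ ·) := by
  obtain ⟨c, hcS, hc⟩ := hS.exists_admittingVertices_subset
  set f : V → ℕ := fun s ↦
    coverCount G (A ∪ S) fun D ↦ AdmitsNbr G (A ∪ S) D v ∧ D ∩ S = {s}
  have f_le (s : V) : f s ≤ #(minP3Covers G A) := by
    rw [← coverCount_true]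
    exact h.coverCount_union_le s fun D _ hDs ↦ ⟨hDs.2, trivial⟩
  have f_le_of_ne {s : V} (hsx : s ≠ x) (hvx : s = c → v = x) : f s ≤ coverCount G A (y ∈ ·) := by
    refine h.coverCount_union_le s fun D hD hDs ↦ ⟨hDs.2, ?_⟩
    by_cases hsc : s = c
    · obtain rfl := hvx hsc
      have hvD : v ∉ D := fun hvD ↦ hsx ((mem_iff_eq_of_inter_eq hDs.2 hv).1 hvD).symm
      refine mem_inter.2 ⟨by_contra fun hy ↦ ?_, h.mem_right⟩
      exact (hDs.1.resolve_left hvD).2 y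
        (mem_sdiff.2 ⟨mem_union_left _ h.mem_right, hy⟩) h.adj
    · refine h.right_mem_of_notMem_admittingVertices hD hDs.2 fun hmem ↦ ?_
      simpa [hsx, hsc] using hc x h.mem_left hmem
  have f_eq_zero {s : V} (hsv : s ≠ v) (hsc : s ≠ c) : f s = 0 := by
    refine coverCount_eq_zero fun D hD hDs ↦ ?_
    simpa [hsv, hsc] using hc v hv (hDs.1.mem_admittingVertices subset_union_right hv hDs.2
      (h.mem_coverVertices_of_inter_eq hD hDs.2))
  have hsum : coverCount G (A ∪ S) (AdmitsNbr G (A ∪ S) · v) ≤ ∑ s ∈ {v, c}, f s := by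
    refine (h.coverCount_union_le_sum _).trans (sum_le_sum_of_ne_zero fun s _ hs0 ↦ ?_)
    by_contra hsvc
    simp only [mem_insert, mem_singleton, not_or] at hsvc
    exact hs0 (f_eq_zero hsvc.1 hsvc.2)
  refine hsum.trans ?_
  obtain rfl | hvc := eq_or_ne v c
  · rw [pair_eq_singleton, sum_singleton]
    exact (f_le v).trans (Nat.le_add_right _ _)
  rw [sum_pair hvc]
  obtain rfl | hvx := eq_or_ne v x
  · exact add_le_add (f_le v) (f_le_of_ne hvc.symm fun _ ↦ rfl)
  · rw [add_comm]
    exact add_le_add (f_le c) (f_le_of_ne hvx fun h ↦ absurd h hvc)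

end AttachedAt

end Clusters

section Decomposition

open Finset

/-- `A` arises from the core `K` by attaching clusters one at a time, each by a single edge to what
is already there; `P` is the set of the clusters. -/
inductive ClusterDecomp (G : SimpleGraph V) (K : Finset V) : Finset V → Finset (Finset V) → Prop
  | core : ClusterDecomp G K K ∅
  | attach {A : Finset V} {P : Finset (Finset V)} {S : Finset V} {x y : V} :
      ClusterDecomp G K A P → AttachedAt G A S x y → IsCluster G S →
      ClusterDecomp G K (A ∪ S) (insert S P)

namespace ClusterDecomp

variable {G : SimpleGraph V} {K A B D S T : Finset V} {P : Finset (Finset V)} {u v x y : V}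
  {p q : Finset V → Prop} {a b c W : ℕ}

lemma core_subset (h : ClusterDecomp G K A P) : K ⊆ A := by
  induction h with
  | core => exact subset_rfl
  | attach _ _ _ ih => exact ih.trans subset_union_left

lemma subset_of_mem (h : ClusterDecomp G K A P) (hS : S ∈ P) : S ⊆ A := by
  induction h with
  | core => simp at hS
  | attach _ _ _ ih =>
    obtain rfl | hS := mem_insert.1 hS
    · exact subset_union_right
    · exact (ih hS).trans subset_union_left

lemma notMem_of_attachedAt (h : ClusterDecomp G K A P) (hS : AttachedAt G A S x y) : S ∉ P :=
  fun hSP ↦ hS.left_notMem (h.subset_of_mem hSP hS.mem_left)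

lemma card_insert_of_attachedAt (h : ClusterDecomp G K A P) (hS : AttachedAt G A S x y) :
    #(insert S P) = #P + 1 :=
  card_insert_of_notMem (h.notMem_of_attachedAt hS)

lemma mem_core_or (h : ClusterDecomp G K A P) (hv : v ∈ A) : v ∈ K ∨ ∃ S ∈ P, v ∈ S := by
  induction h with
  | core => exact .inl hv
  | attach _ _ _ ih =>
    obtain hv | hv := mem_union.1 hv
    · exact (ih hv).imp_right fun ⟨S, hS, hvS⟩ ↦ ⟨S, mem_insert_of_mem hS, hvS⟩
    · exact .inr ⟨_, mem_insert_self _ _, hv⟩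

lemma disjoint_core (h : ClusterDecomp G K A P) (hS : S ∈ P) : Disjoint K S := by
  induction h with
  | core => simp at hS
  | attach hA hS' _ ih =>
    obtain rfl | hS := mem_insert.1 hS
    · exact hS'.disjoint.mono_left hA.core_subset
    · exact ih hS

lemma disjoint (h : ClusterDecomp G K A P) (hS : S ∈ P) (hT : T ∈ P) (hST : S ≠ T) :
    Disjoint S T := by
  induction h with
  | core => simp at hS
  | attach hA hS' _ ih =>
    rcases mem_insert.1 hS with hS | hS <;> rcases mem_insert.1 hT with hT | hT
    · exact absurd (hS.trans hT.symm) hST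
    · exact (hS ▸ hS'.disjoint.mono_left (hA.subset_of_mem hT)).symm
    · exact hT ▸ hS'.disjoint.mono_left (hA.subset_of_mem hS)
    · exact ih hS hT

lemma isCluster (h : ClusterDecomp G K A P) (hS : S ∈ P) : IsCluster G S := by
  induction h with
  | core => simp at hS
  | attach _ _ hS' ih =>
    obtain rfl | hS := mem_insert.1 hS
    · exact hS'
    · exact ih hS

lemma card_eq (h : ClusterDecomp G K A P) : #A = #K + ∑ S ∈ P, #S := by
  induction h with
  | core => simp
  | attach hA hS _ ih =>
    rw [sum_insert (hA.notMem_of_attachedAt hS), card_union_of_disjoint hS.disjoint, ih]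
    ring

lemma eq_core (h : ClusterDecomp G K A ∅) : A = K := by
  generalize hP : (∅ : Finset (Finset V)) = P at h
  cases h with
  | core => rfl
  | attach => exact absurd hP.symm (insert_ne_empty _ _)

lemma inter_core_mem_minP3Covers (h : ClusterDecomp G K A P) (hD : D ∈ minP3Covers G A) :
    D ∩ K ∈ minP3Covers G K := by
  induction h generalizing D with
  | core => rwa [inter_eq_left.2 (subset_of_mem_minP3Covers hD)]
  | attach hA hS _ ih =>
    have := ih (hS.inter_mem_minP3Covers hD).1
    rwa [inter_assoc, inter_eq_right.2 hA.core_subset] at this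

lemma exists_inter_eq_singleton (h : ClusterDecomp G K A P) (hD : D ∈ minP3Covers G A)
    (hT : T ∈ P) : ∃ s ∈ coverVertices G T, D ∩ T = {s} := by
  induction h generalizing D with
  | core => simp at hT
  | attach hA hS _ ih =>
    obtain rfl | hT := mem_insert.1 hT
    · exact (hS.inter_mem_minP3Covers hD).2
    · have := ih (hS.inter_mem_minP3Covers hD).1 hT
      rwa [inter_assoc, inter_eq_right.2 (hA.subset_of_mem hT)] at this

lemma inter_subset_coverVertices (h : ClusterDecomp G K A P) (hD : D ∈ minP3Covers G A)
    (hS : S ∈ P) : D ∩ S ⊆ coverVertices G S := by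
  obtain ⟨s, hs, hDs⟩ := h.exists_inter_eq_singleton hD hS
  rwa [hDs, singleton_subset_iff]

lemma inter_eq_singleton_of_mem (h : ClusterDecomp G K A P) (hD : D ∈ minP3Covers G A)
    (hS : S ∈ P) (hv : v ∈ S) (hvD : v ∈ D) : D ∩ S = {v} := by
  obtain ⟨s, -, hs⟩ := h.exists_inter_eq_singleton hD hS
  rw [hs, (mem_iff_eq_of_inter_eq hs hv).1 hvD]

lemma inter_subset_admittingVertices (h : ClusterDecomp G K A P) (hD : D ∈ minP3Covers G A)
    (hS : S ∈ P) (hSB : S ⊆ B) (hv : v ∈ S) (hvD : AdmitsNbr G B D v) :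
    D ∩ S ⊆ admittingVertices G S v := by
  obtain ⟨s, hs, hDs⟩ := h.exists_inter_eq_singleton hD hS
  rw [hDs, singleton_subset_iff]
  exact hvD.mem_admittingVertices hSB hv hDs hs

lemma inter_subset_admittingVertices_erase (h : ClusterDecomp G K A P) (hD : D ∈ minP3Covers G A)
    (hS : S ∈ P) (hv : v ∈ S) (hx : x ∈ A) (hxS : x ∉ S) (hvx : G.Adj v x) (hvD : v ∉ D)
    (hxD : x ∉ D) : D ∩ S ⊆ (admittingVertices G S v).erase v :=
  subset_erase.2 ⟨h.inter_subset_admittingVertices hD hS le_rfl hv <| .inr <|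
    (isDissoc_sdiff_of_mem_minP3Covers hD).isolatedIn_of_adj
      (sdiff_subset_sdiff (h.subset_of_mem hS) le_rfl) (mem_sdiff.2 ⟨hv, hvD⟩)
      (mem_sdiff.2 ⟨hx, hxD⟩) (fun hx ↦ hxS (mem_sdiff.1 hx).1) hvx,
    fun hv ↦ hvD (mem_inter.1 hv).1⟩

lemma coverCount_le_mul_prod (h : ClusterDecomp G K A P) (r : Finset V → Finset V)
    (hpq : ∀ D ∈ minP3Covers G A, p D → q (D ∩ K) ∧ ∀ S ∈ P, D ∩ S ⊆ r S) :
    coverCount G A p ≤ coverCount G K q * ∏ S ∈ P, #(r S) := by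
  refine (coverCount_mono hpq).trans ?_
  clear hpq
  induction h with
  | core =>
    rw [prod_empty, mul_one]
    refine coverCount_mono fun D hD hDq ↦ ?_
    rw [← inter_eq_left.2 (subset_of_mem_minP3Covers hD)]
    exact hDq.1
  | @attach A P S x y hA hS _ ih =>
    have hfiber (s : V) : coverCount G (A ∪ S)
        (fun D ↦ (q (D ∩ K) ∧ ∀ T ∈ insert S P, D ∩ T ⊆ r T) ∧ D ∩ S = {s}) ≤
        coverCount G K q * ∏ T ∈ P, #(r T) := by
      refine (hS.coverCount_union_le s fun D _ hDs ↦ ⟨hDs.2, ?_, fun T hT ↦ ?_⟩).trans ih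
      · rw [inter_assoc, inter_eq_right.2 hA.core_subset]
        exact hDs.1.1
      · rw [inter_assoc, inter_eq_right.2 (hA.subset_of_mem hT)]
        exact hDs.1.2 T (mem_insert_of_mem hT)
    rw [prod_insert (hA.notMem_of_attachedAt hS), mul_left_comm]
    refine (hS.coverCount_union_le_sum _).trans
      ((sum_le_sum_of_ne_zero fun s _ hs0 ↦ ?_).trans (sum_le_card_nsmul (r S) _ _
        fun s _ ↦ hfiber s))
    by_contra hsr
    refine hs0 (coverCount_eq_zero fun D _ hDs ↦ hsr (hDs.1.2 S (mem_insert_self _ _) ?_))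
    rw [hDs.2]
    exact mem_singleton_self s

lemma coverCount_le_of_core (h : ClusterDecomp G K A P) (q : Finset V → Prop)
    (ha : coverCount G K q ≤ a) (hW : ∏ S ∈ P, #(coverVertices G S) ≤ W)
    (hpq : ∀ D ∈ minP3Covers G A, p D → q (D ∩ K)) : coverCount G A p ≤ a * W :=
  (h.coverCount_le_mul_prod (coverVertices G) fun D hD hp ↦
    ⟨hpq D hD hp, fun _ hS ↦ h.inter_subset_coverVertices hD hS⟩).trans (mul_le_mul' ha hW)

lemma coverCount_le_of_subset (h : ClusterDecomp G K A P) (q : Finset V → Prop) (hS : S ∈ P)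
    (X : Finset V) (ha : coverCount G K q ≤ a) (hX : #X ≤ b)
    (hW : ∏ T ∈ P.erase S, #(coverVertices G T) ≤ W)
    (hpq : ∀ D ∈ minP3Covers G A, p D → q (D ∩ K) ∧ D ∩ S ⊆ X) :
    coverCount G A p ≤ a * (b * W) := by
  set r : Finset V → Finset V := fun T ↦ if T = S then X else coverVertices G T with hr
  have hprod : ∏ T ∈ P, #(r T) = #X * ∏ T ∈ P.erase S, #(coverVertices G T) := by
    rw [← mul_prod_erase _ _ hS]
    exact congr_arg₂ _ (by simp [hr]) (prod_congr rfl fun T hT ↦ by simp [hr, ne_of_mem_erase hT])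
  refine (h.coverCount_le_mul_prod r fun D hD hp ↦ ⟨(hpq D hD hp).1, fun T hT ↦ ?_⟩).trans
    (mul_le_mul' ha (hprod.trans_le (mul_le_mul' hX hW)))
  obtain rfl | hTS := eq_or_ne T S
  · simpa [hr] using (hpq D hD hp).2
  · simpa [hr, hTS] using h.inter_subset_coverVertices hD hT

lemma coverCount_le_of_subset_of_subset (h : ClusterDecomp G K A P) (q : Finset V → Prop)
    (hS : S ∈ P) (hT : T ∈ P) (hST : S ≠ T) (X Y : Finset V) (ha : coverCount G K q ≤ a)
    (hX : #X ≤ b) (hY : #Y ≤ c) (hW : ∏ U ∈ (P.erase S).erase T, #(coverVertices G U) ≤ W)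
    (hpq : ∀ D ∈ minP3Covers G A, p D → q (D ∩ K) ∧ D ∩ S ⊆ X ∧ D ∩ T ⊆ Y) :
    coverCount G A p ≤ a * (b * (c * W)) := by
  set r : Finset V → Finset V :=
    fun U ↦ if U = S then X else if U = T then Y else coverVertices G U with hr
  have hprod : ∏ U ∈ P, #(r U) =
      #X * (#Y * ∏ U ∈ (P.erase S).erase T, #(coverVertices G U)) := by
    rw [← mul_prod_erase _ _ hS, ← mul_prod_erase _ _ (mem_erase.2 ⟨hST.symm, hT⟩)]
    refine congr_arg₂ _ (by simp [hr]) (congr_arg₂ _ (by simp [hr, hST.symm])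
      (prod_congr rfl fun U hU ↦ ?_))
    simp only [mem_erase] at hU
    simp [hr, hU.1, hU.2.1]
  refine (h.coverCount_le_mul_prod r fun D hD hp ↦ ⟨(hpq D hD hp).1, fun U hU ↦ ?_⟩).trans
    (mul_le_mul' ha (hprod.trans_le (mul_le_mul' hX (mul_le_mul' hY hW))))
  obtain rfl | hUS := eq_or_ne U S
  · simpa [hr] using (hpq D hD hp).2.1
  obtain rfl | hUT := eq_or_ne U T
  · simpa [hr, hUS] using (hpq D hD hp).2.2
  · simpa [hr, hUS, hUT] using h.inter_subset_coverVertices hD hU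

lemma exists_adj_core (h : ClusterDecomp G K A P)
    (hu : ∀ y ∈ K, ∀ x, x ∉ K → G.Adj x y → y = u) (hP : P.Nonempty) :
    ∃ S ∈ P, ∃ x ∈ coverVertices G S, G.Adj x u := by
  induction h with
  | core => simp at hP
  | @attach A P S x y hA hS _ ih =>
    obtain rfl | hP := P.eq_empty_or_nonempty
    · obtain rfl := hA.eq_core
      exact ⟨S, mem_insert_self _ _, x, hS.left_mem_coverVertices,
        hu y hS.mem_right x hS.left_notMem hS.adj ▸ hS.adj⟩
    · obtain ⟨T, hT, hTu⟩ := ih hP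
      exact ⟨T, mem_insert_of_mem hT, hTu⟩

lemma exists_adj_of_not_star (h : ClusterDecomp G K A P)
    (hu : ∀ y ∈ K, ∀ x, x ∉ K → G.Adj x y → y = u) (hP : ¬∀ S ∈ P, ∃ x ∈ S, G.Adj x u) :
    ∃ S ∈ P, ∃ T ∈ P, S ≠ T ∧ ∃ v ∈ S, ∃ x ∈ T, G.Adj v x := by
  induction h with
  | core => simp at hP
  | @attach A P S x y hA hS _ ih =>
    by_cases hstar : ∀ S ∈ P, ∃ x ∈ S, G.Adj x u
    · obtain hy | ⟨T, hT, hy⟩ := hA.mem_core_or hS.mem_right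
      · refine absurd (fun T hT ↦ ?_) hP
        obtain rfl | hT := mem_insert.1 hT
        · exact ⟨x, hS.mem_left,
            hu y hy x (fun hx ↦ hS.left_notMem (hA.core_subset hx)) hS.adj ▸ hS.adj⟩
        · exact hstar T hT
      · exact ⟨S, mem_insert_self _ _, T, mem_insert_of_mem hT,
          fun hST ↦ hA.notMem_of_attachedAt hS (hST ▸ hT), x, hS.mem_left, y, hy, hS.adj⟩
    · obtain ⟨S, hS, T, hT, hST⟩ := ih hstar
      exact ⟨S, mem_insert_of_mem hS, T, mem_insert_of_mem hT, hST⟩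

end ClusterDecomp

lemma prod_card_coverVertices_le_pow {G : SimpleGraph V} {P : Finset (Finset V)}
    (hP : ∀ S ∈ P, IsCherry G S) : ∏ S ∈ P, #(coverVertices G S) ≤ 3 ^ #P :=
  prod_le_pow_card _ _ _ fun S hS ↦ (hP S hS).card_coverVertices_le

lemma prod_erase_card_coverVertices_le_pow {G : SimpleGraph V} {P : Finset (Finset V)}
    {S : Finset V} {n : ℕ} (hP : ∀ T ∈ P.erase S, IsCherry G T) (hS : S ∈ P) (hn : #P = n + 1) :
    ∏ T ∈ P.erase S, #(coverVertices G T) ≤ 3 ^ n := by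
  have := prod_card_coverVertices_le_pow hP
  rwa [card_erase_of_mem hS, hn, Nat.add_sub_cancel] at this

lemma prod_erase_erase_card_coverVertices_le_pow {G : SimpleGraph V} {P : Finset (Finset V)}
    {S T : Finset V} {n : ℕ} (hP : ∀ U ∈ (P.erase S).erase T, IsCherry G U) (hS : S ∈ P)
    (hT : T ∈ P) (hST : S ≠ T) (hn : #P = n + 2) :
    ∏ U ∈ (P.erase S).erase T, #(coverVertices G U) ≤ 3 ^ n :=
  prod_erase_card_coverVertices_le_pow hP (mem_erase.2 ⟨hST.symm, hT⟩)
    (by rw [card_erase_of_mem hS, hn, Nat.add_sub_cancel_right (n + 1) 1])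

end Decomposition

section RootedCore

open Finset

variable {G : SimpleGraph V} {K A S : Finset V} {P : Finset (Finset V)} {u v x y : V}
  {j q b W : ℕ}

lemma IsCherry.card_admittingVertices_le (h : IsCherry G S) (hv : v ∈ S) :
    #(admittingVertices G S v) ≤ 2 :=
  let ⟨_, _, hc⟩ := h.exists_admittingVertices_subset
  (card_le_card (hc v hv)).trans card_le_two

lemma IsCherry.card_admittingVertices_erase_le (h : IsCherry G S) (hv : v ∈ S) :
    #((admittingVertices G S v).erase v) ≤ 1 := by
  obtain ⟨c, -, hc⟩ := h.exists_admittingVertices_subset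
  refine (card_le_card fun s hs ↦ ?_).trans (card_singleton c).le
  obtain ⟨hsv, hs⟩ := mem_erase.1 hs
  simpa [hsv] using hc v hv hs

lemma IsCherry.card_admittingVertices_inter_le (h : IsCherry G S) (hv : v ∈ S) (hy : y ∈ S)
    (hvy : y ≠ v) : #(admittingVertices G S v ∩ admittingVertices G S y) ≤ 1 := by
  obtain ⟨c, -, hc⟩ := h.exists_admittingVertices_subset
  refine (card_le_card fun s hs ↦ ?_).trans (card_singleton c).le
  have hv := hc v hv (mem_inter.1 hs).1
  have hy := hc y hy (mem_inter.1 hs).2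
  simp only [mem_insert, mem_singleton] at hv hy ⊢
  obtain rfl | hv := hv
  · exact hy.resolve_left hvy.symm
  · exact hv

namespace AttachedAt

lemma card_minP3Covers_union_le_of_isCherry (h : AttachedAt G A S x y) (hS : IsCherry G S) :
    #(minP3Covers G (A ∪ S)) ≤
      #(minP3Covers G A) + coverCount G A (y ∈ ·) + coverCount G A (AdmitsNbr G A · y) := by
  have := h.coverCount_union_le_of_isCherry (p := fun _ ↦ True) (q := fun _ ↦ True) hS
    fun _ _ _ ↦ trivial
  simpa only [coverCount_true, true_and] using this

lemma coverCount_admitsNbr_union_le_of_mem (h : AttachedAt G A S x y) (hS : IsCherry G S)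
    (hv : v ∈ A) : coverCount G (A ∪ S) (AdmitsNbr G (A ∪ S) · v) ≤
      coverCount G A (AdmitsNbr G A · v) +
        coverCount G A (fun D ↦ AdmitsNbr G A D v ∧ y ∈ D) +
        coverCount G A (fun D ↦ AdmitsNbr G A D v ∧ AdmitsNbr G A D y) :=
  h.coverCount_union_le_of_isCherry hS fun _ _ hD ↦ hD.inter subset_union_left hv

lemma coverCount_admitsNbr_right_le (h : AttachedAt G A S x y) (hS : IsCherry G S) :
    coverCount G (A ∪ S) (AdmitsNbr G (A ∪ S) · y) ≤
      coverCount G A (AdmitsNbr G A · y) + 2 * coverCount G A (y ∈ ·) := by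
  have hmem : coverCount G (A ∪ S) (y ∈ ·) ≤ 3 * coverCount G A (y ∈ ·) := by
    have := h.coverCount_union_le_of_isCherry (p := (y ∈ ·)) (q := (y ∈ ·)) hS
      fun D _ hD ↦ mem_inter.2 ⟨hD, h.mem_right⟩
    have h₁ : coverCount G A (fun D ↦ y ∈ D ∧ y ∈ D) ≤ coverCount G A (y ∈ ·) :=
      coverCount_mono fun D _ hD ↦ hD.1
    have h₂ : coverCount G A (fun D ↦ y ∈ D ∧ AdmitsNbr G A D y) ≤ coverCount G A (y ∈ ·) :=
      coverCount_mono fun D _ hD ↦ hD.1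
    lia
  have hiso : coverCount G (A ∪ S) (fun D ↦ IsolatedIn G ((A ∪ S) \ D) y) ≤
      coverCount G A (fun D ↦ IsolatedIn G (A \ D) y) := by
    refine h.coverCount_union_le x fun D hD hDy ↦ ⟨?_, ?_⟩
    · obtain ⟨s, -, hs⟩ := (h.inter_mem_minP3Covers hD).2
      have hx : x ∈ D := by_contra fun hx ↦
        hDy.2 x (mem_sdiff.2 ⟨mem_union_right _ h.mem_left, hx⟩) h.adj.symm
      rw [hs, (mem_iff_eq_of_inter_eq hs h.mem_left).1 hx]
    · rw [sdiff_inter_self_right]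
      exact hDy.mono (sdiff_subset_sdiff subset_union_left le_rfl)
        (mem_sdiff.2 ⟨h.mem_right, (mem_sdiff.1 hDy.1).2⟩)
  rw [coverCount_admitsNbr, coverCount_admitsNbr]
  lia

end AttachedAt

/-- A core `K` that communicates with the outside only through its root `u`, with the bounds on
its minimum `P₃`-covers that hold for a cycle on `3 * j + 2` vertices. -/
structure RootedCore (G : SimpleGraph V) (K : Finset V) (u : V) (j : ℕ) : Prop where
  one_le : 1 ≤ j
  root_mem : u ∈ K
  eq_root_of_adj : ∀ y ∈ K, ∀ x, x ∉ K → G.Adj x y → y = u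
  card_minP3Covers_le : #(minP3Covers G K) ≤ 3 * j + 2
  coverCount_root_le : coverCount G K (u ∈ ·) ≤ j + 1
  coverCount_isolatedIn_root_le : coverCount G K (fun D ↦ IsolatedIn G (K \ D) u) ≤ 1

namespace RootedCore

lemma coverCount_true_le (hK : RootedCore G K u j) :
    coverCount G K (fun _ ↦ True) ≤ 3 * j + 2 :=
  coverCount_true.trans_le hK.card_minP3Covers_le

lemma coverCount_admitsNbr_root_le (hK : RootedCore G K u j) :
    coverCount G K (AdmitsNbr G K · u) ≤ j + 2 := by
  have h₁ := hK.coverCount_root_le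
  have h₂ := hK.coverCount_isolatedIn_root_le
  rw [coverCount_admitsNbr]
  lia

lemma right_eq_root (hK : RootedCore G K u j) (h : ClusterDecomp G K A P)
    (hS : AttachedAt G A S x y) (hy : y ∈ K) : y = u :=
  hK.eq_root_of_adj y hy x (fun hx ↦ hS.left_notMem (h.core_subset hx)) hS.adj

lemma coverCount_root_le_of_decomp (hK : RootedCore G K u j) (h : ClusterDecomp G K A P)
    (hW : ∏ S ∈ P, #(coverVertices G S) ≤ W) : coverCount G A (u ∈ ·) ≤ (j + 1) * W :=
  h.coverCount_le_of_core (u ∈ ·) hK.coverCount_root_le hW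
    fun _ _ hD ↦ mem_inter.2 ⟨hD, hK.root_mem⟩

lemma coverCount_admitsNbr_root_le_of_decomp (hK : RootedCore G K u j)
    (h : ClusterDecomp G K A P) (hW : ∏ S ∈ P, #(coverVertices G S) ≤ W) :
    coverCount G A (AdmitsNbr G A · u) ≤ (j + 2) * W :=
  h.coverCount_le_of_core (AdmitsNbr G K · u) hK.coverCount_admitsNbr_root_le hW
    fun _ _ hD ↦ hD.inter h.core_subset hK.root_mem

lemma coverCount_le_of_mem (hK : RootedCore G K u j) (h : ClusterDecomp G K A P) (hS : S ∈ P)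
    (hv : v ∈ S) (hW : ∏ T ∈ P.erase S, #(coverVertices G T) ≤ W) :
    coverCount G A (v ∈ ·) ≤ (3 * j + 2) * W := by
  have := h.coverCount_le_of_subset (p := (v ∈ ·)) (fun _ ↦ True) hS {v} hK.coverCount_true_le
    (card_singleton v).le hW
    fun D hD hvD ↦ ⟨trivial, (h.inter_eq_singleton_of_mem hD hS hv hvD).subset⟩
  rwa [one_mul] at this

lemma coverCount_admitsNbr_le_of_mem (hK : RootedCore G K u j) (h : ClusterDecomp G K A P)
    (hS : S ∈ P) (hv : v ∈ S) (hb : #(admittingVertices G S v) ≤ b)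
    (hW : ∏ T ∈ P.erase S, #(coverVertices G T) ≤ W) :
    coverCount G A (AdmitsNbr G A · v) ≤ (3 * j + 2) * (b * W) :=
  h.coverCount_le_of_subset (fun _ ↦ True) hS _ hK.coverCount_true_le hb hW
    fun _ hD hDv ↦ ⟨trivial, h.inter_subset_admittingVertices hD hS (h.subset_of_mem hS) hv hDv⟩

section IsolatedRoot

variable {D : Finset V}

lemma mem_of_isolatedIn_of_adj (h : ClusterDecomp G K A P) (hS : S ∈ P) (hx : x ∈ S)
    (hxu : G.Adj x u) (hD : IsolatedIn G (A \ D) u) : x ∈ D :=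
  by_contra fun hxD ↦ hD.2 x (mem_sdiff.2 ⟨h.subset_of_mem hS hx, hxD⟩) hxu.symm

lemma isolatedIn_core (hK : RootedCore G K u j) (h : ClusterDecomp G K A P)
    (hD : IsolatedIn G (A \ D) u) : IsolatedIn G (K \ (D ∩ K)) u := by
  rw [sdiff_inter_self_right]
  exact hD.mono (sdiff_subset_sdiff h.core_subset le_rfl)
    (mem_sdiff.2 ⟨hK.root_mem, (mem_sdiff.1 hD.1).2⟩)

lemma coverCount_isolatedIn_root_le_of_adj (hK : RootedCore G K u j)
    (h : ClusterDecomp G K A P) (hS : S ∈ P) (hx : x ∈ S) (hxu : G.Adj x u)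
    (hW : ∏ T ∈ P.erase S, #(coverVertices G T) ≤ W) :
    coverCount G A (fun D ↦ IsolatedIn G (A \ D) u) ≤ W := by
  have := h.coverCount_le_of_subset (p := fun D ↦ IsolatedIn G (A \ D) u)
    (fun D ↦ IsolatedIn G (K \ D) u) hS {x} hK.coverCount_isolatedIn_root_le
    (card_singleton x).le hW fun D hD hDu ↦ ⟨hK.isolatedIn_core h hDu,
      (h.inter_eq_singleton_of_mem hD hS hx (mem_of_isolatedIn_of_adj h hS hx hxu hDu)).subset⟩
  rwa [one_mul, one_mul] at this

lemma coverCount_isolatedIn_root_le_one (hK : RootedCore G K u j) (h : ClusterDecomp G K A P)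
    (hstar : ∀ S ∈ P, ∃ x ∈ S, G.Adj x u) :
    coverCount G A (fun D ↦ IsolatedIn G (A \ D) u) ≤ 1 := by
  have : Nonempty V := ⟨u⟩
  choose! f hfS hfu using hstar
  refine (h.coverCount_le_mul_prod (q := fun D ↦ IsolatedIn G (K \ D) u) (fun S ↦ {f S})
    fun D hD hDu ↦ ⟨hK.isolatedIn_core h hDu, fun S hS ↦ ?_⟩).trans ?_
  · exact (h.inter_eq_singleton_of_mem hD hS (hfS S hS)
      (mem_of_isolatedIn_of_adj h hS (hfS S hS) (hfu S hS) hDu)).subset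
  · simpa using hK.coverCount_isolatedIn_root_le

end IsolatedRoot

lemma coverCount_root_le_of_not_star (hK : RootedCore G K u j) (h : ClusterDecomp G K A P)
    (hP : ∀ S ∈ P, IsCherry G S) (hq : #P = q + 2) (hstar : ¬∀ S ∈ P, ∃ x ∈ S, G.Adj x u) :
    coverCount G A (u ∈ ·) ≤ (j + 1) * (6 * 3 ^ q) := by
  obtain ⟨S, hS, T, hT, hST, v, hv, x, hx, hvx⟩ := h.exists_adj_of_not_star hK.eq_root_of_adj hstar
  have hdisj := h.disjoint hS hT hST
  have hW := prod_erase_erase_card_coverVertices_le_pow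
    (fun U hU ↦ hP U (mem_of_mem_erase (mem_of_mem_erase hU))) hS hT hST hq
  have root_mem {D : Finset V} (hD : u ∈ D) : u ∈ D ∩ K := mem_inter.2 ⟨hD, hK.root_mem⟩
  have hx_mem : coverCount G A (fun D ↦ u ∈ D ∧ x ∈ D) ≤ (j + 1) * (1 * 3 ^ (q + 1)) :=
    h.coverCount_le_of_subset (u ∈ ·) hT {x} hK.coverCount_root_le (card_singleton x).le
      (prod_erase_card_coverVertices_le_pow (fun U hU ↦ hP U (mem_of_mem_erase hU)) hT hq)
      fun D hD hDx ↦ ⟨root_mem hDx.1, (h.inter_eq_singleton_of_mem hD hT hx hDx.2).subset⟩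
  have hv_mem : coverCount G A (fun D ↦ u ∈ D ∧ x ∉ D ∧ v ∈ D) ≤
      (j + 1) * (1 * (2 * 3 ^ q)) := by
    refine h.coverCount_le_of_subset_of_subset (u ∈ ·) hS hT hST {v} (T.erase x)
      hK.coverCount_root_le (card_singleton v).le ?_ hW fun D hD hDxv ↦ ⟨root_mem hDxv.1,
        (h.inter_eq_singleton_of_mem hD hS hv hDxv.2.2).subset, subset_erase.2
          ⟨inter_subset_right, fun hxD ↦ hDxv.2.1 (mem_inter.1 hxD).1⟩⟩
    rw [card_erase_of_mem hx, (hP T hT).1]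
  -- If neither `v` nor `x` is deleted, each is isolated within its cluster, which forces the
  -- deleted vertex there.
  have hnot_mem : coverCount G A (fun D ↦ u ∈ D ∧ x ∉ D ∧ v ∉ D) ≤
      (j + 1) * (1 * (1 * 3 ^ q)) := by
    refine h.coverCount_le_of_subset_of_subset (u ∈ ·) hS hT hST _ _ hK.coverCount_root_le
      ((hP S hS).card_admittingVertices_erase_le hv)
      ((hP T hT).card_admittingVertices_erase_le hx) hW
      fun D hD ⟨huD, hxD, hvD⟩ ↦ ⟨root_mem huD, ?_, ?_⟩
    · exact h.inter_subset_admittingVertices_erase hD hS hv (h.subset_of_mem hT hx)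
        (disjoint_right.1 hdisj hx) hvx hvD hxD
    · exact h.inter_subset_admittingVertices_erase hD hT hx (h.subset_of_mem hS hv)
        (disjoint_left.1 hdisj hv) hvx.symm hxD hvD
  have hsplit : coverCount G A (u ∈ ·) ≤ coverCount G A (fun D ↦ u ∈ D ∧ x ∈ D) +
      (coverCount G A (fun D ↦ u ∈ D ∧ x ∉ D ∧ v ∈ D) +
        coverCount G A (fun D ↦ u ∈ D ∧ x ∉ D ∧ v ∉ D)) :=
    (coverCount_mono fun D _ hD ↦ by tauto).trans
      (coverCount_or_le.trans (add_le_add_right coverCount_or_le _))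
  rw [pow_succ] at hx_mem
  lia

end RootedCore

end RootedCore

section CherryBound

open Finset

variable {G : SimpleGraph V} {K A S T : Finset V} {P : Finset (Finset V)} {u v x y : V}
  {j q m a : ℕ}

/-- The bound for a cycle on `3 * j + 2` vertices with `q + 1` cherries attached. The second
expression suffices when every cherry is adjacent to the root. -/
def cherryBound (j q : ℕ) : ℕ :=
  max ((3 * j + 2) * 3 ^ q + (j + 1) * (q + 2) + 1) ((j + 1) * 3 ^ (q + 1) + q + 2 * j + 2)

lemma succ_le_three_pow (q : ℕ) : q + 1 ≤ 3 ^ q := Nat.lt_pow_self (by norm_num)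

lemma add_le_cherryBound_succ (hm : m ≤ cherryBound j q)
    (ha : a ≤ 2 * ((3 * j + 2) * 3 ^ q) + (j + 1)) : m + a ≤ cherryBound j (q + 1) := by
  have hq := succ_le_three_pow q
  simp only [cherryBound, pow_succ] at hm ⊢
  obtain hm | hm := le_max_iff.1 hm
  · exact le_max_of_le_left (by lia)
  obtain hjq | hjq := le_or_gt j (2 * 3 ^ q)
  · exact le_max_of_le_right (by lia)
  · have hqj : 3 ^ q ≤ j * q + 1 := by
      obtain rfl | hq₀ := Nat.eq_zero_or_pos q
      · simp
      · have := Nat.mul_le_mul_left j hq₀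
        lia
    exact le_max_of_le_left (by lia)

lemma add_le_of_le_cherryBound (hj : 1 ≤ j) (hm : m ≤ cherryBound j q)
    (ha : a ≤ (j + 1) * 3 ^ (q + 1)) : m + a ≤ (3 * j + 2) * 3 ^ (q + 1) + (j + 1) := by
  have hq := succ_le_three_pow q
  simp only [cherryBound, pow_succ] at hm ha ⊢
  have h₁ : j * (q + 1) ≤ j * 3 ^ q := Nat.mul_le_mul_left j hq
  have h₂ : 1 * (q + 1) ≤ j * (q + 1) := Nat.mul_le_mul_right _ hj
  obtain hm | hm := le_max_iff.1 hm <;> nlinarith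

lemma card_eq_succ_of_mem (hS : S ∈ P) : ∃ q, #P = q + 1 :=
  Nat.exists_eq_add_one.2 (card_pos.2 ⟨S, hS⟩)

lemma exists_eq_succ_of_mem_of_mem (hS : S ∈ P) (hT : T ∈ P) (hST : S ≠ T) (hq : #P = q + 1) :
    ∃ r, q = r + 1 := by
  have := one_lt_card.2 ⟨S, hS, T, hT, hST⟩
  exact Nat.exists_eq_add_one.2 (by lia)

namespace RootedCore

lemma coverCount_le_of_forall_isCherry (hK : RootedCore G K u j) (h : ClusterDecomp G K A P)
    (hP : ∀ T ∈ P, IsCherry G T) (hS : AttachedAt G A S x y) :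
    coverCount G A (y ∈ ·) ≤ (j + 1) * 3 ^ #P := by
  obtain hy | ⟨T, hT, hy⟩ := h.mem_core_or hS.mem_right
  · rw [hK.right_eq_root h hS hy]
    exact hK.coverCount_root_le_of_decomp h (prod_card_coverVertices_le_pow hP)
  · obtain ⟨r, hr⟩ := card_eq_succ_of_mem hT
    have := hK.coverCount_le_of_mem h hT hy
      (prod_erase_card_coverVertices_le_pow (fun U hU ↦ hP U (mem_of_mem_erase hU)) hT hr)
    rw [hr, pow_succ]
    lia

lemma card_minP3Covers_add_coverCount_le (hK : RootedCore G K u j) (h : ClusterDecomp G K A P)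
    (hP : ∀ T ∈ P, IsCherry G T) (hS : AttachedAt G A S x y)
    (hA : ∀ r, #P = r + 1 → #(minP3Covers G A) ≤ cherryBound j r) :
    #(minP3Covers G A) + coverCount G A (y ∈ ·) ≤ (3 * j + 2) * 3 ^ #P + (j + 1) := by
  have hy := hK.coverCount_le_of_forall_isCherry h hP hS
  obtain rfl | ⟨T, hT⟩ := P.eq_empty_or_nonempty
  · obtain rfl := h.eq_core
    simpa using add_le_add hK.card_minP3Covers_le hy
  · obtain ⟨r, hr⟩ := card_eq_succ_of_mem hT
    rw [hr] at hy ⊢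
    exact add_le_of_le_cherryBound hK.one_le (hA r hr) hy

lemma coverCount_admitsNbr_and_add_le_of_ne (hK : RootedCore G K u j) (h : ClusterDecomp G K A P)
    (hP : ∀ T ∈ P, IsCherry G T) (hq : #P = q + 1) (hS : S ∈ P) (hT : T ∈ P) (hST : S ≠ T)
    (hv : v ∈ S) (hy : y ∈ T) :
    coverCount G A (fun D ↦ AdmitsNbr G A D v ∧ y ∈ D) +
      coverCount G A (fun D ↦ AdmitsNbr G A D v ∧ AdmitsNbr G A D y) ≤
        2 * ((3 * j + 2) * 3 ^ q) := by
  have hv₂ := (hP S hS).card_admittingVertices_le hv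
  have hvS {D : Finset V} (hD : D ∈ minP3Covers G A) (hDv : AdmitsNbr G A D v) :
      D ∩ S ⊆ admittingVertices G S v :=
    h.inter_subset_admittingVertices hD hS (h.subset_of_mem hS) hv hDv
  obtain ⟨r, rfl⟩ := exists_eq_succ_of_mem_of_mem hS hT hST hq
  have hW := prod_erase_erase_card_coverVertices_le_pow
    (fun U hU ↦ hP U (mem_of_mem_erase (mem_of_mem_erase hU))) hS hT hST hq
  have hmem : coverCount G A (fun D ↦ AdmitsNbr G A D v ∧ y ∈ D) ≤
      (3 * j + 2) * (2 * (1 * 3 ^ r)) :=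
    h.coverCount_le_of_subset_of_subset (fun _ ↦ True) hS hT hST _ {y} hK.coverCount_true_le
      hv₂ (card_singleton y).le hW fun D hD hDvy ↦ ⟨trivial, hvS hD hDvy.1,
        (h.inter_eq_singleton_of_mem hD hT hy hDvy.2).subset⟩
  have hadm : coverCount G A (fun D ↦ AdmitsNbr G A D v ∧ AdmitsNbr G A D y) ≤
      (3 * j + 2) * (2 * (2 * 3 ^ r)) :=
    h.coverCount_le_of_subset_of_subset (fun _ ↦ True) hS hT hST _ _ hK.coverCount_true_le
      hv₂ ((hP T hT).card_admittingVertices_le hy) hW fun D hD hDvy ↦ ⟨trivial, hvS hD hDvy.1,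
        h.inter_subset_admittingVertices hD hT (h.subset_of_mem hT) hy hDvy.2⟩
  rw [pow_succ]
  lia

lemma coverCount_admitsNbr_and_add_le (hK : RootedCore G K u j) (h : ClusterDecomp G K A P)
    (hP : ∀ T ∈ P, IsCherry G T) (hq : #P = q + 1) (hS : S ∈ P) (hv : v ∈ S)
    (hy : y ∈ S ∨ y = u ∨ ∃ T ∈ P, S ≠ T ∧ y ∈ T) (hvy : y ≠ v) :
    coverCount G A (fun D ↦ AdmitsNbr G A D v ∧ y ∈ D) +
      coverCount G A (fun D ↦ AdmitsNbr G A D v ∧ AdmitsNbr G A D y) ≤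
        2 * ((3 * j + 2) * 3 ^ q) := by
  have hj := hK.one_le
  have hv₂ := (hP S hS).card_admittingVertices_le hv
  have hW := prod_erase_card_coverVertices_le_pow (fun U hU ↦ hP U (mem_of_mem_erase hU)) hS hq
  have hvS {D : Finset V} (hD : D ∈ minP3Covers G A) (hDv : AdmitsNbr G A D v) :
      D ∩ S ⊆ admittingVertices G S v :=
    h.inter_subset_admittingVertices hD hS (h.subset_of_mem hS) hv hDv
  obtain hy | rfl | ⟨T, hT, hST, hy⟩ := hy
  · have hmem : coverCount G A (fun D ↦ AdmitsNbr G A D v ∧ y ∈ D) ≤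
        coverCount G A (fun D ↦ AdmitsNbr G A D v ∧ AdmitsNbr G A D y) :=
      coverCount_mono fun D _ hD ↦ ⟨hD.1, .inl hD.2⟩
    have hadm : coverCount G A (fun D ↦ AdmitsNbr G A D v ∧ AdmitsNbr G A D y) ≤
        (3 * j + 2) * (1 * 3 ^ q) :=
      h.coverCount_le_of_subset (fun _ ↦ True) hS _ hK.coverCount_true_le
        ((hP S hS).card_admittingVertices_inter_le hv hy hvy) hW fun D hD hDvy ↦
          ⟨trivial, subset_inter (hvS hD hDvy.1) (h.inter_subset_admittingVertices hD hS
            (h.subset_of_mem hS) hy hDvy.2)⟩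
    lia
  · have hmem : coverCount G A (fun D ↦ AdmitsNbr G A D v ∧ y ∈ D) ≤ (j + 1) * (2 * 3 ^ q) :=
      h.coverCount_le_of_subset (y ∈ ·) hS _ hK.coverCount_root_le hv₂ hW fun D hD hDvy ↦
        ⟨mem_inter.2 ⟨hDvy.2, hK.root_mem⟩, hvS hD hDvy.1⟩
    have hadm : coverCount G A (fun D ↦ AdmitsNbr G A D v ∧ AdmitsNbr G A D y) ≤
        (j + 2) * (2 * 3 ^ q) :=
      h.coverCount_le_of_subset (AdmitsNbr G K · y) hS _ hK.coverCount_admitsNbr_root_le hv₂ hW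
        fun D hD hDvy ↦ ⟨hDvy.2.inter h.core_subset hK.root_mem, hvS hD hDvy.1⟩
    nlinarith [Nat.mul_le_mul_right (3 ^ q) hj]
  · exact hK.coverCount_admitsNbr_and_add_le_of_ne h hP hq hS hT hST hv hy

lemma coverCount_admitsNbr_union_le (hK : RootedCore G K u j) (h : ClusterDecomp G K A P)
    (hP : ∀ T ∈ P, IsCherry G T) (hS : AttachedAt G A S x y) (hSc : IsCherry G S)
    (hq : #P = q + 1) (hT : T ∈ P) (hv : v ∈ T)
    (ih : coverCount G A (AdmitsNbr G A · v) ≤ (3 * j + 2) * 3 ^ q + (j + 1)) :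
    coverCount G (A ∪ S) (AdmitsNbr G (A ∪ S) · v) ≤ (3 * j + 2) * 3 ^ (q + 1) + (j + 1) := by
  rw [pow_succ]
  obtain rfl | hyv := eq_or_ne y v
  · have hstep := hS.coverCount_admitsNbr_right_le hSc
    have hy := hK.coverCount_le_of_mem h hT hv
      (prod_erase_card_coverVertices_le_pow (fun U hU ↦ hP U (mem_of_mem_erase hU)) hT hq)
    lia
  · have hstep := hS.coverCount_admitsNbr_union_le_of_mem hSc (h.subset_of_mem hT hv)
    have hy : y ∈ T ∨ y = u ∨ ∃ U ∈ P, T ≠ U ∧ y ∈ U := by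
      obtain hy | ⟨U, hU, hy⟩ := h.mem_core_or hS.mem_right
      · exact .inr (.inl (hK.right_eq_root h hS hy))
      · obtain rfl | hTU := eq_or_ne T U
        exacts [.inl hy, .inr (.inr ⟨U, hU, hTU, hy⟩)]
    have := hK.coverCount_admitsNbr_and_add_le h hP hq hT hv hy hyv
    lia

lemma card_minP3Covers_le_of_star (hK : RootedCore G K u j) (h : ClusterDecomp G K A P)
    (hP : ∀ S ∈ P, IsCherry G S) (hstar : ∀ S ∈ P, ∃ x ∈ S, G.Adj x u) :
    #(minP3Covers G A) ≤ (j + 1) * 3 ^ #P + #P + 2 * j + 1 := by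
  induction h with
  | core =>
    have := hK.card_minP3Covers_le
    simp only [card_empty, pow_zero]
    lia
  | @attach A P S x y h hS _ ih =>
    obtain ⟨hSc, hP⟩ := (forall_mem_insert _ _ _).1 hP
    obtain ⟨⟨z, hz, hzu⟩, hstar⟩ := (forall_mem_insert _ _ _).1 hstar
    obtain rfl : u = y := (hS.eq_of_adj u (h.core_subset hK.root_mem) z hz hzu.symm).1
    have hstep := hS.card_minP3Covers_union_le_of_isCherry hSc
    have hmem := hK.coverCount_root_le_of_decomp h (prod_card_coverVertices_le_pow hP)
    have hiso := hK.coverCount_isolatedIn_root_le_one h hstar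
    have ih := ih hP hstar
    rw [coverCount_admitsNbr] at hstep
    rw [h.card_insert_of_attachedAt hS, pow_succ]
    lia

lemma coverCount_add_coverCount_le_of_not_star (hK : RootedCore G K u j)
    (h : ClusterDecomp G K A P) (hP : ∀ T ∈ P, IsCherry G T) (hS : AttachedAt G A S x y)
    (hq : #P = q + 1) (hstar : ¬∀ T ∈ insert S P, ∃ x ∈ T, G.Adj x u)
    (hadm : ∀ T ∈ P, ∀ v ∈ T,
      coverCount G A (AdmitsNbr G A · v) ≤ (3 * j + 2) * 3 ^ q + (j + 1)) :
    coverCount G A (y ∈ ·) + coverCount G A (AdmitsNbr G A · y) ≤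
      2 * ((3 * j + 2) * 3 ^ q) + (j + 1) := by
  obtain hy | ⟨T, hT, hy⟩ := h.mem_core_or hS.mem_right
  · obtain rfl := hK.right_eq_root h hS hy
    have hstar : ¬∀ T ∈ P, ∃ x ∈ T, G.Adj x y := fun hP ↦
      hstar ((forall_mem_insert _ _ _).2 ⟨⟨x, hS.mem_left, hS.adj⟩, hP⟩)
    obtain ⟨T, hT, z, hz, hzy⟩ :=
      h.exists_adj_core hK.eq_root_of_adj (card_pos.1 (by lia))
    obtain ⟨S₁, hS₁, S₂, hS₂, hne, -⟩ := h.exists_adj_of_not_star hK.eq_root_of_adj hstar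
    obtain ⟨r, rfl⟩ := exists_eq_succ_of_mem_of_mem hS₁ hS₂ hne hq
    have hmem := hK.coverCount_root_le_of_not_star h hP hq hstar
    have hiso := hK.coverCount_isolatedIn_root_le_of_adj h hT (coverVertices_subset G T hz) hzy
      (prod_erase_card_coverVertices_le_pow (fun U hU ↦ hP U (mem_of_mem_erase hU)) hT hq)
    have hpos : 0 < 3 ^ r := by positivity
    rw [coverCount_admitsNbr]
    rw [pow_succ] at hiso ⊢
    nlinarith [hK.one_le]
  · have hmem := hK.coverCount_le_of_mem h hT hy
      (prod_erase_card_coverVertices_le_pow (fun U hU ↦ hP U (mem_of_mem_erase hU)) hT hq)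
    have hadm := hadm T hT y hy
    lia

lemma card_minP3Covers_le_and_coverCount_admitsNbr_le (hK : RootedCore G K u j)
    (h : ClusterDecomp G K A P) (hP : ∀ S ∈ P, IsCherry G S) (hq : #P = q + 1) :
    #(minP3Covers G A) ≤ cherryBound j q ∧ ∀ S ∈ P, ∀ v ∈ S,
      coverCount G A (AdmitsNbr G A · v) ≤ (3 * j + 2) * 3 ^ q + (j + 1) := by
  induction h generalizing q with
  | core => simp at hq
  | @attach A P S x y h hS hSc ih =>
    obtain rfl : #P = q := by rw [h.card_insert_of_attachedAt hS] at hq; lia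
    obtain ⟨hSc, hPA⟩ := (forall_mem_insert _ _ _).1 hP
    refine ⟨?_, fun T hT v hv ↦ ?_⟩
    · by_cases hstar : ∀ T ∈ insert S P, ∃ x ∈ T, G.Adj x u
      · have := hK.card_minP3Covers_le_of_star (h.attach hS (.inl hSc)) hP hstar
        rw [hq] at this
        exact le_max_of_le_right (by lia)
      obtain rfl | ⟨T, hT⟩ := P.eq_empty_or_nonempty
      · obtain rfl := h.eq_core
        refine absurd (fun T hT ↦ ?_) hstar
        obtain rfl : T = S := by simpa using hT
        exact ⟨x, hS.mem_left, hK.right_eq_root h hS hS.mem_right ▸ hS.adj⟩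
      obtain ⟨r, hr⟩ := card_eq_succ_of_mem hT
      have hstep := hS.card_minP3Covers_union_le_of_isCherry hSc
      have hy := hK.coverCount_add_coverCount_le_of_not_star h hPA hS hr hstar (ih hPA hr).2
      rw [hr]
      rw [add_assoc] at hstep
      exact hstep.trans (add_le_cherryBound_succ (ih hPA hr).1 hy)
    · obtain rfl | hT := mem_insert.1 hT
      · exact (hS.coverCount_admitsNbr_union_le_of_isCherry hSc hv).trans
          (hK.card_minP3Covers_add_coverCount_le h hPA hS fun r hr ↦ (ih hPA hr).1)
      · obtain ⟨r, hr⟩ := card_eq_succ_of_mem hT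
        rw [hr]
        exact hK.coverCount_admitsNbr_union_le h hPA hS hSc hr hT hv ((ih hPA hr).2 T hT v hv)

end RootedCore

end CherryBound

section QuadBound

open Finset

variable {G : SimpleGraph V} {K A Q S : Finset V} {P : Finset (Finset V)} {u x y : V}
  {j q b w : ℕ}

/-- The bound for a cycle on `3 * j + 2` vertices with one quad and `q` cherries attached. -/
def quadBound (j q : ℕ) : ℕ :=
  max ((3 * j + 2) * 3 ^ q + (j + 1)) ((j + 1) * 3 ^ (q + 1) + 1)

lemma prod_card_coverVertices_le_of_isQuad (hQ : Q ∈ P) (hQq : IsQuad G Q)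
    (hP : ∀ S ∈ P.erase Q, IsCherry G S) (hq : #P = q + 1) :
    ∏ S ∈ P, #(coverVertices G S) ≤ 2 * 3 ^ q := by
  rw [← mul_prod_erase _ _ hQ]
  exact Nat.mul_le_mul hQq.2.1 (prod_erase_card_coverVertices_le_pow hP hQ hq)

namespace RootedCore

lemma coverCount_add_coverCount_le_of_isQuad (hK : RootedCore G K u j)
    (h : ClusterDecomp G K A P) (hS : AttachedAt G A S x y) (hQ : Q ∈ P) (hQq : IsQuad G Q)
    (hP : ∀ S ∈ P.erase Q, IsCherry G S) (hq : #P = q + 1) :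
    coverCount G A (y ∈ ·) + coverCount G A (AdmitsNbr G A · y) ≤
      2 * ((3 * j + 2) * 3 ^ q) := by
  obtain hy | ⟨T, hT, hy⟩ := h.mem_core_or hS.mem_right
  · obtain rfl := hK.right_eq_root h hS hy
    have hW := prod_card_coverVertices_le_of_isQuad hQ hQq hP hq
    have hmem := hK.coverCount_root_le_of_decomp h hW
    have hadm := hK.coverCount_admitsNbr_root_le_of_decomp h hW
    nlinarith [Nat.mul_le_mul_right (3 ^ q) hK.one_le]
  obtain rfl | hTQ := eq_or_ne T Q
  · have hW := prod_erase_card_coverVertices_le_pow hP hT hq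
    have hmem := hK.coverCount_le_of_mem h hT hy hW
    have hadm := hK.coverCount_admitsNbr_le_of_mem h hT hy (hQq.2.2 y hy) hW
    lia
  · obtain ⟨r, rfl⟩ := exists_eq_succ_of_mem_of_mem hT hQ hTQ hq
    have hTc := hP T (mem_erase.2 ⟨hTQ, hT⟩)
    have hW : ∏ S ∈ P.erase T, #(coverVertices G S) ≤ 2 * 3 ^ r :=
      prod_card_coverVertices_le_of_isQuad (mem_erase.2 ⟨hTQ.symm, hQ⟩) hQq
        (fun U hU ↦ hP U (erase_subset_erase _ (erase_subset _ _) hU))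
        (by rw [card_erase_of_mem hT, hq, Nat.add_sub_cancel])
    have hmem := hK.coverCount_le_of_mem h hT hy hW
    have hadm := hK.coverCount_admitsNbr_le_of_mem h hT hy (hTc.card_admittingVertices_le hy) hW
    rw [pow_succ]
    lia

lemma card_minP3Covers_le_of_isQuad (hK : RootedCore G K u j) (h : ClusterDecomp G K A P)
    (hQ : Q ∈ P) (hQq : IsQuad G Q) (hP : ∀ S ∈ P.erase Q, IsCherry G S) (hq : #P = q + 1) :
    #(minP3Covers G A) ≤ quadBound j q := by
  induction h generalizing q with
  | core => simp at hQ
  | @attach A P S x y h hS _ ih =>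
    have hSP := h.notMem_of_attachedAt hS
    obtain rfl : #P = q := by rw [h.card_insert_of_attachedAt hS] at hq; lia
    obtain rfl | hQP := mem_insert.1 hQ
    · rw [erase_insert hSP] at hP
      exact le_max_of_le_left ((hS.card_minP3Covers_union_le_of_isQuad hQq).trans
        (hK.card_minP3Covers_add_coverCount_le h hP hS fun r hr ↦
          (hK.card_minP3Covers_le_and_coverCount_admitsNbr_le h hP hr).1))
    · have hSQ : S ≠ Q := fun hSQ ↦ hSP (hSQ ▸ hQP)
      rw [erase_insert_of_ne hSQ] at hP
      obtain ⟨hSc, hP⟩ := (forall_mem_insert _ _ _).1 hP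
      obtain ⟨r, hr⟩ := card_eq_succ_of_mem hQP
      have hstep := hS.card_minP3Covers_union_le_of_isCherry hSc
      have hy := hK.coverCount_add_coverCount_le_of_isQuad h hS hQP hQq hP hr
      rw [hr]
      have ih := ih hQP hP hr
      simp only [quadBound, pow_succ] at ih ⊢
      obtain ih | ih := le_max_iff.1 ih
      · exact le_max_of_le_left (by lia)
      · exact le_max_of_le_right (by lia)

lemma card_minP3Covers_le_of_adj_root (hK : RootedCore G K u j) (h : ClusterDecomp G K A P)
    (hS : S ∈ P) (hx : x ∈ coverVertices G S) (hxu : G.Adj x u)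
    (hb : #(coverVertices G S) ≤ b + 1) (hw : ∏ T ∈ P.erase S, #(coverVertices G T) ≤ w) :
    #(minP3Covers G A) ≤ (3 * j + 2) * w + (j + 2) * (b * w) := by
  have hxS := coverVertices_subset G S hx
  have hmem : coverCount G A (x ∈ ·) ≤ (3 * j + 2) * w := hK.coverCount_le_of_mem h hS hxS hw
  have hnot_mem : coverCount G A (x ∉ ·) ≤ (j + 2) * (b * w) := by
    refine h.coverCount_le_of_subset (AdmitsNbr G K · u) hS ((coverVertices G S).erase x)
      hK.coverCount_admitsNbr_root_le (by rw [card_erase_of_mem hx]; lia) hw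
      fun D hD hxD ↦ ⟨?_, subset_erase.2 ⟨h.inter_subset_coverVertices hD hS,
        fun hx ↦ hxD (mem_inter.1 hx).1⟩⟩
    rw [AdmitsNbr, sdiff_inter_self_right, mem_inter, and_iff_left hK.root_mem]
    refine or_iff_not_imp_left.2 fun hu ↦
      (isDissoc_sdiff_of_mem_minP3Covers hD).isolatedIn_of_adj (y := x)
        (sdiff_subset_sdiff h.core_subset le_rfl) (mem_sdiff.2 ⟨hK.root_mem, hu⟩)
        (mem_sdiff.2 ⟨h.subset_of_mem hS hxS, hxD⟩)
        (fun hxK ↦ disjoint_right.1 (h.disjoint_core hS) hxS (mem_sdiff.1 hxK).1) hxu.symm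
  have hsplit : coverCount G A (fun _ ↦ True) ≤
      coverCount G A (x ∈ ·) + coverCount G A (x ∉ ·) :=
    (coverCount_mono fun D _ _ ↦ em (x ∈ D)).trans coverCount_or_le
  rw [coverCount_true] at hsplit
  lia

end RootedCore

/-- A core `K` in which every minimum `P₃`-cover admitting a neighbour at a vertex of `K` that is
adjacent to the outside contains `u`, with the bounds on its minimum `P₃`-covers that hold for a
cycle on `3 * j + 2` vertices with a pendant vertex at `u`. -/
structure PendantCore (G : SimpleGraph V) (K : Finset V) (u : V) (j : ℕ) : Prop where
  root_mem_of_admitsNbr : ∀ y ∈ K, ∀ x, x ∉ K → G.Adj x y → ∀ D ∈ minP3Covers G K,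
    AdmitsNbr G K D y → u ∈ D
  card_minP3Covers_le : #(minP3Covers G K) ≤ j + 2
  coverCount_root_le : coverCount G K (u ∈ ·) ≤ j + 1

namespace PendantCore

lemma coverCount_true_le (hK : PendantCore G K u j) : coverCount G K (fun _ ↦ True) ≤ j + 2 :=
  coverCount_true.trans_le hK.card_minP3Covers_le

lemma card_minP3Covers_le_of_forall_isCherry (hK : PendantCore G K u j)
    (h : ClusterDecomp G K A P) (hP : ∀ S ∈ P, IsCherry G S) :
    #(minP3Covers G A) ≤ (j + 1) * 3 ^ #P + 1 := by
  induction h with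
  | core => simpa using hK.card_minP3Covers_le
  | @attach A P S x y h hS _ ih =>
    obtain ⟨hSc, hP⟩ := (forall_mem_insert _ _ _).1 hP
    have hstep := hS.card_minP3Covers_union_le_of_isCherry hSc
    have ih := ih hP
    suffices coverCount G A (y ∈ ·) + coverCount G A (AdmitsNbr G A · y) ≤
        2 * ((j + 1) * 3 ^ #P) by
      rw [h.card_insert_of_attachedAt hS, pow_succ]
      lia
    obtain hy | ⟨T, hT, hy⟩ := h.mem_core_or hS.mem_right
    · have hadm : coverCount G A (AdmitsNbr G A · y) ≤ (j + 1) * 3 ^ #P :=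
        h.coverCount_le_of_core (u ∈ ·) hK.coverCount_root_le (prod_card_coverVertices_le_pow hP)
          fun D hD hDy ↦ hK.root_mem_of_admitsNbr y hy x
            (fun hx ↦ hS.left_notMem (h.core_subset hx)) hS.adj _
            (h.inter_core_mem_minP3Covers hD) (hDy.inter h.core_subset hy)
      have hmem : coverCount G A (y ∈ ·) ≤ coverCount G A (AdmitsNbr G A · y) :=
        coverCount_mono fun _ _ ↦ .inl
      lia
    · obtain ⟨r, hr⟩ := card_eq_succ_of_mem hT
      have hW := prod_erase_card_coverVertices_le_pow
        (fun U hU ↦ hP U (mem_of_mem_erase hU)) hT hr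
      have hmem : coverCount G A (y ∈ ·) ≤ (j + 2) * (1 * 3 ^ r) :=
        h.coverCount_le_of_subset (fun _ ↦ True) hT {y} hK.coverCount_true_le
          (card_singleton y).le hW fun D hD hyD ↦
            ⟨trivial, (h.inter_eq_singleton_of_mem hD hT hy hyD).subset⟩
      have hadm : coverCount G A (AdmitsNbr G A · y) ≤ (j + 2) * (2 * 3 ^ r) :=
        h.coverCount_le_of_subset (fun _ ↦ True) hT _ hK.coverCount_true_le
          ((hP T hT).card_admittingVertices_le hy) hW fun D hD hDy ↦
            ⟨trivial, h.inter_subset_admittingVertices hD hT (h.subset_of_mem hT) hy hDy⟩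
      rw [hr, pow_succ]
      lia

end PendantCore

end QuadBound

section Counting

open Finset

variable {G : SimpleGraph V} {K A : Finset V} {P : Finset (Finset V)} {u : V}
  {j q a b M N m w : ℕ}

/-- The cherries among the clusters in `P`. -/
noncomputable def cherries (G : SimpleGraph V) (P : Finset (Finset V)) : Finset (Finset V) :=
  {S ∈ P | IsCherry G S}

/-- The quads among the clusters in `P`. -/
noncomputable def quads (G : SimpleGraph V) (P : Finset (Finset V)) : Finset (Finset V) :=
  {S ∈ P | IsQuad G S}

/-- The large clusters among the clusters in `P`. -/
noncomputable def largeClusters (G : SimpleGraph V) (P : Finset (Finset V)) :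
    Finset (Finset V) :=
  {S ∈ P | IsLargeCluster G S}

lemma card_cherries_add_card_quads_add_card_largeClusters (hP : ∀ S ∈ P, IsCluster G S) :
    #P = #(cherries G P) + #(quads G P) + #(largeClusters G P) := by
  rw [cherries, quads, largeClusters, card_filter, card_filter, card_filter, card_eq_sum_ones,
    ← sum_add_distrib, ← sum_add_distrib]
  refine sum_congr rfl fun S hS ↦ ?_
  have := hP S hS
  grind [IsCluster, IsCherry, IsQuad, IsLargeCluster]

lemma three_mul_card_cherries_add_le_sum_card (hP : ∀ S ∈ P, IsCluster G S) :
    3 * #(cherries G P) + 4 * #(quads G P) + 5 * #(largeClusters G P) ≤ ∑ S ∈ P, #S := by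
  rw [cherries, quads, largeClusters, card_filter, card_filter, card_filter, mul_sum, mul_sum,
    mul_sum, ← sum_add_distrib, ← sum_add_distrib]
  refine sum_le_sum fun S hS ↦ ?_
  have := hP S hS
  grind [IsCluster, IsCherry, IsQuad, IsLargeCluster]

lemma sum_card_eq_of_largeClusters_eq_empty (hP : ∀ S ∈ P, IsCluster G S)
    (hlarge : largeClusters G P = ∅) :
    ∑ S ∈ P, #S = 3 * #(cherries G P) + 4 * #(quads G P) := by
  rw [cherries, quads, card_filter, card_filter, mul_sum, mul_sum, ← sum_add_distrib]
  refine sum_congr rfl fun S hS ↦ ?_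
  have := hP S hS
  have := filter_eq_empty_iff.1 hlarge hS
  grind [IsCluster, IsCherry, IsQuad]

lemma prod_card_coverVertices_le (hP : ∀ S ∈ P, IsCluster G S) :
    ∏ S ∈ P, #(coverVertices G S) ≤ 3 ^ #(cherries G P) * 2 ^ #(quads G P) := by
  rw [cherries, quads, ← prod_const, ← prod_const, prod_filter, prod_filter, ← prod_mul_distrib]
  refine prod_le_prod' fun S hS ↦ ?_
  have := hP S hS
  have := @IsCherry.card_coverVertices_le V G S
  grind [IsCluster, IsCherry, IsQuad, IsLargeCluster]

lemma forall_isCherry (hP : ∀ S ∈ P, IsCluster G S) (hquads : quads G P = ∅)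
    (hlarge : largeClusters G P = ∅) : ∀ S ∈ P, IsCherry G S := fun S hS ↦
  (hP S hS).resolve_right fun h ↦
    h.elim (filter_eq_empty_iff.1 hquads hS) (filter_eq_empty_iff.1 hlarge hS)

lemma three_pow_mul_two_pow_le (h : a + b ≤ q) : 3 ^ a * 2 ^ b ≤ 3 ^ q :=
  calc 3 ^ a * 2 ^ b ≤ 3 ^ a * 3 ^ b := Nat.mul_le_mul_left _ (Nat.pow_le_pow_left (by lia) b)
    _ = 3 ^ (a + b) := (pow_add ..).symm
    _ ≤ 3 ^ q := Nat.pow_le_pow_right (by lia) h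

/-- The upper bounds on the number `m` of maximum dissociation sets of a potted graph of order
`3 * j + 2 + N` whose cycle has length `3 * j + 2`, by the residue of `N` modulo `3`. -/
def PottedBound (j N m : ℕ) : Prop :=
  (∀ q, N = 3 * (q + 1) → m ≤ cherryBound j q) ∧
  (∀ q, N = 3 * (q + 1) + 1 → m ≤ quadBound j q) ∧
  (∀ q, N = 3 * (q + 1) + 2 → m ≤ (j + 1) * 3 ^ (q + 1))

lemma le_cherryBound_of_le_mul (hM : M ≤ 3 * j + 2) (hw : w ≤ 3 ^ q) (hm : m ≤ M * w) :
    m ≤ cherryBound j q :=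
  le_max_of_le_left ((hm.trans (Nat.mul_le_mul hM hw)).trans (by lia))

lemma le_quadBound_of_le_mul (hM : M ≤ 3 * j + 2) (hw : w ≤ 3 ^ q) (hm : m ≤ M * w) :
    m ≤ quadBound j q :=
  le_max_of_le_left ((hm.trans (Nat.mul_le_mul hM hw)).trans (by lia))

lemma le_mul_three_pow_succ_of_le_mul (hM : M ≤ 3 * j + 3) (hw : w ≤ 3 ^ q) (hm : m ≤ M * w) :
    m ≤ (j + 1) * 3 ^ (q + 1) := by
  have := hm.trans (Nat.mul_le_mul hM hw)
  rw [pow_succ]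
  lia

namespace ClusterDecomp

lemma card_minP3Covers_le_mul (h : ClusterDecomp G K A P) (hM : #(minP3Covers G K) ≤ M) :
    #(minP3Covers G A) ≤ M * (3 ^ #(cherries G P) * 2 ^ #(quads G P)) := by
  rw [← coverCount_true] at hM ⊢
  exact h.coverCount_le_of_core (fun _ ↦ True) hM
    (prod_card_coverVertices_le fun _ ↦ h.isCluster) fun _ _ _ ↦ trivial

lemma pottedBound (h : ClusterDecomp G K A P) (hK : #(minP3Covers G K) ≤ j + 1)
    (hN : ∑ S ∈ P, #S + 2 ≤ N) : PottedBound j N #(minP3Covers G A) := by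
  have hsum := three_mul_card_cherries_add_le_sum_card fun _ ↦ h.isCluster
  have hle := h.card_minP3Covers_le_mul hK
  refine ⟨fun q hq ↦ ?_, fun q hq ↦ ?_, fun q hq ↦ ?_⟩
  · exact le_cherryBound_of_le_mul (by lia) (three_pow_mul_two_pow_le (by lia)) hle
  · exact le_quadBound_of_le_mul (by lia) (three_pow_mul_two_pow_le (by lia)) hle
  · exact hle.trans (Nat.mul_le_mul_left _ (three_pow_mul_two_pow_le (by lia)))

end ClusterDecomp

lemma PendantCore.pottedBound (hK : PendantCore G K u j) (h : ClusterDecomp G K A P)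
    (hj : 1 ≤ j) (hN : ∑ S ∈ P, #S + 1 = N) : PottedBound j N #(minP3Covers G A) := by
  have hP : ∀ S ∈ P, IsCluster G S := fun _ ↦ h.isCluster
  have hcard := card_cherries_add_card_quads_add_card_largeClusters hP
  have hsum := three_mul_card_cherries_add_le_sum_card hP
  have heq (hlarge : #(largeClusters G P) = 0) :=
    sum_card_eq_of_largeClusters_eq_empty hP (card_eq_zero.1 hlarge)
  have hle := h.card_minP3Covers_le_mul hK.card_minP3Covers_le
  refine ⟨fun q hq ↦ ?_, fun q hq ↦ ?_, fun q hq ↦ ?_⟩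
  · exact le_cherryBound_of_le_mul (by lia) (three_pow_mul_two_pow_le (by omega)) hle
  · by_cases hall : #(quads G P) = 0 ∧ #(largeClusters G P) = 0
    · have hcherry := forall_isCherry hP (card_eq_zero.1 hall.1) (card_eq_zero.1 hall.2)
      have := hK.card_minP3Covers_le_of_forall_isCherry h hcherry
      rw [show #P = q + 1 by omega] at this
      exact le_max_of_le_right this
    · exact le_quadBound_of_le_mul (by lia) (three_pow_mul_two_pow_le (by omega)) hle
  · by_cases hquad : #(quads G P) = 1 ∧ #(largeClusters G P) = 0
    · rw [hquad.1, show #(cherries G P) = q by omega] at hle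
      rw [pow_succ]
      nlinarith [Nat.mul_le_mul_right (3 ^ q) hj]
    · exact le_mul_three_pow_succ_of_le_mul (by lia) (three_pow_mul_two_pow_le (by omega)) hle

namespace RootedCore

lemma card_minP3Covers_le_of_card_quads_eq_one (hK : RootedCore G K u j)
    (h : ClusterDecomp G K A P) (hquads : #(quads G P) = 1) (hlarge : largeClusters G P = ∅)
    (hq : #P = q + 1) : #(minP3Covers G A) ≤ quadBound j q := by
  obtain ⟨Q, hQ⟩ := card_eq_one.1 hquads
  have hmem (S : Finset V) : S ∈ P ∧ IsQuad G S ↔ S = Q := by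
    rw [← mem_filter, ← mem_singleton, ← hQ, quads]
  obtain ⟨hQP, hQq⟩ := (hmem Q).2 rfl
  refine hK.card_minP3Covers_le_of_isQuad h hQP hQq (fun S hS ↦ ?_) hq
  have hSP := mem_of_mem_erase hS
  exact (h.isCluster hSP).resolve_right fun hS' ↦ hS'.elim
    (fun hSq ↦ ne_of_mem_erase hS ((hmem S).1 ⟨hSP, hSq⟩)) (filter_eq_empty_iff.1 hlarge hSP)

lemma card_minP3Covers_le_of_card_quads_eq_two (hK : RootedCore G K u j)
    (h : ClusterDecomp G K A P) (hquads : #(quads G P) = 2) (hlarge : largeClusters G P = ∅)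
    (hq : #(cherries G P) + 1 = q) : #(minP3Covers G A) ≤ (j + 1) * 3 ^ (q + 1) := by
  have hcard := card_cherries_add_card_quads_add_card_largeClusters fun _ ↦ h.isCluster
  obtain ⟨S, hS, x, hx, hxu⟩ := h.exists_adj_core hK.eq_root_of_adj (card_pos.1 (by lia))
  have hprod := prod_card_coverVertices_le
    fun T (hT : T ∈ P.erase S) ↦ h.isCluster (mem_of_mem_erase hT)
  subst hq
  obtain hSc | hSq | hSl := h.isCluster hS
  · have hSmem : S ∈ cherries G P := mem_filter.2 ⟨hS, hSc⟩
    have hSq : S ∉ quads G P := fun h ↦ by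
      have := hSc.1
      have := (mem_filter.1 h).2.1
      lia
    rw [cherries, quads, filter_erase, filter_erase, ← cherries, ← quads,
      erase_eq_of_notMem hSq, hquads, card_erase_of_mem hSmem] at hprod
    have hle := hK.card_minP3Covers_le_of_adj_root h hS hx hxu hSc.card_coverVertices_le hprod
    obtain ⟨r, hr⟩ := card_eq_succ_of_mem hSmem
    rw [hr, Nat.add_sub_cancel] at hle
    rw [hr, pow_succ, pow_succ, pow_succ]
    lia
  · have hSmem : S ∈ quads G P := mem_filter.2 ⟨hS, hSq⟩
    have hSc : S ∉ cherries G P := fun h ↦ by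
      have := hSq.1
      have := (mem_filter.1 h).2.1
      lia
    rw [cherries, quads, filter_erase, filter_erase, ← cherries, ← quads,
      erase_eq_of_notMem hSc, card_erase_of_mem hSmem, hquads] at hprod
    have hle := hK.card_minP3Covers_le_of_adj_root h hS hx hxu hSq.2.1 hprod
    rw [pow_succ, pow_succ]
    lia
  · exact absurd hSl (filter_eq_empty_iff.1 hlarge hS)

lemma pottedBound (hK : RootedCore G K u j) (h : ClusterDecomp G K A P)
    (hN : ∑ S ∈ P, #S = N) : PottedBound j N #(minP3Covers G A) := by
  have hP : ∀ S ∈ P, IsCluster G S := fun _ ↦ h.isCluster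
  have hcard := card_cherries_add_card_quads_add_card_largeClusters hP
  have hsum := three_mul_card_cherries_add_le_sum_card hP
  have heq (hlarge : #(largeClusters G P) = 0) :=
    sum_card_eq_of_largeClusters_eq_empty hP (card_eq_zero.1 hlarge)
  have hle := h.card_minP3Covers_le_mul hK.card_minP3Covers_le
  refine ⟨fun q hq ↦ ?_, fun q hq ↦ ?_, fun q hq ↦ ?_⟩
  · by_cases hall : #(quads G P) = 0 ∧ #(largeClusters G P) = 0
    · have hcherry := forall_isCherry hP (card_eq_zero.1 hall.1) (card_eq_zero.1 hall.2)
      exact (hK.card_minP3Covers_le_and_coverCount_admitsNbr_le h hcherry (by lia)).1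
    · exact le_cherryBound_of_le_mul le_rfl (three_pow_mul_two_pow_le (by omega)) hle
  · by_cases hquad : #(quads G P) = 1 ∧ #(largeClusters G P) = 0
    · exact hK.card_minP3Covers_le_of_card_quads_eq_one h hquad.1 (card_eq_zero.1 hquad.2)
        (by lia)
    · exact le_quadBound_of_le_mul le_rfl (three_pow_mul_two_pow_le (by omega)) hle
  · by_cases hquad : #(quads G P) = 2 ∧ #(largeClusters G P) = 0
    · exact hK.card_minP3Covers_le_of_card_quads_eq_two h hquad.1 (card_eq_zero.1 hquad.2)
        (by lia)
    · exact le_mul_three_pow_succ_of_le_mul (by lia) (three_pow_mul_two_pow_le (by omega)) hle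

end RootedCore

end Counting

section Spider

open Finset

variable {G : SimpleGraph V} {S : Finset V} {s x : V}

/-- `G[S]` is a spider with legs of length at most two and centre `x`: deleting `x` leaves only
isolated vertices and edges, and every vertex is within distance two of `x`. Edges from `x` to both
ends of a leg are allowed. -/
structure IsSpider (G : SimpleGraph V) (S : Finset V) (x : V) : Prop where
  center_mem : x ∈ S
  isDissoc_erase : IsDissoc G (S.erase x)
  eq_or_adj_or : ∀ z ∈ S, z = x ∨ G.Adj x z ∨ ∃ w ∈ S, G.Adj x w ∧ G.Adj w z

namespace IsSpider

lemma isCherry (h : IsSpider G S x) (hS : #S = 3) : IsCherry G S := by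
  refine ⟨hS, ?_⟩
  obtain ⟨p, q, hpq, hpqS⟩ := card_eq_two.1 (by rw [card_erase_of_mem h.center_mem, hS] :
    #(S.erase x) = 2)
  have hmem (z) : z ∈ S ↔ z = x ∨ z = p ∨ z = q := by
    grind [h.center_mem, insert_erase h.center_mem]
  have hp := h.eq_or_adj_or p
  have hq := h.eq_or_adj_or q
  by_cases hxp : G.Adj x p
  · by_cases hxq : G.Adj x q
    · exact ⟨x, by grind⟩
    · exact ⟨p, by grind [G.adj_comm, G.irrefl]⟩
  · exact ⟨q, by grind [G.adj_comm, G.irrefl]⟩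

lemma adj_of_mem_coverVertices (h : IsSpider G S x) (hS : 4 ≤ #S) (hs : s ∈ coverVertices G S)
    (hsx : s ≠ x) : G.Adj x s := by
  obtain ⟨hsS, hs⟩ := mem_filter.1 hs
  rw [isDissoc_iff] at hs
  by_contra hxs
  obtain ⟨w, hw, hxw, -⟩ := ((h.eq_or_adj_or s hsS).resolve_left hsx).resolve_left hxs
  have hxS := h.center_mem
  have hsub : S ⊆ {x, s, w} := fun z hz ↦ by
    have hz' := h.eq_or_adj_or z hz
    grind [G.adj_comm]
  exact absurd ((card_le_card hsub).trans card_le_three) (by lia)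

lemma exists_path_of_mem_coverVertices (h : IsSpider G S x) (hS : 4 ≤ #S)
    (hs : s ∈ coverVertices G S) (hsx : s ≠ x) :
    ∃ b g, S = {x, s, b, g} ∧ G.Adj x b ∧ G.Adj s g := by
  obtain ⟨hsS, hs⟩ := mem_filter.1 hs
  set T := (S.erase x).erase s with hT
  have hmem {z} : z ∈ T ↔ z ∈ S ∧ z ≠ x ∧ z ≠ s := by simp only [hT, mem_erase]; tauto
  have hxS : x ∈ S.erase s := mem_erase.2 ⟨hsx.symm, h.center_mem⟩
  have center_nbr_unique {a b} (ha : a ∈ T) (hb : b ∈ T) : G.Adj x a → G.Adj x b → a = b :=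
    isDissoc_iff.1 hs x hxS a (by grind) b (by grind)
  have foot_nbr_unique {a b} (ha : a ∈ T) (hb : b ∈ T) : G.Adj s a → G.Adj s b → a = b :=
    isDissoc_iff.1 h.isDissoc_erase s (by grind) a (by grind) b (by grind)
  have adj_or_adj {z} (hz : z ∈ T) : G.Adj x z ∨ G.Adj s z := by
    obtain ⟨hzS, hzx, hzs⟩ := hmem.1 hz
    obtain hxz | ⟨w, hw, hxw, hwz⟩ := (h.eq_or_adj_or z hzS).resolve_left hzx
    · exact .inl hxz
    · by_cases hws : w = s
      · exact .inr (hws ▸ hwz)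
      · exact absurd (isDissoc_iff.1 hs w (by grind) z (by grind) x hxS hwz hxw.symm) hzx
  obtain ⟨p, hp, q, hq, hpq⟩ := one_lt_card.1 (by
    rw [card_erase_of_mem (mem_erase.2 ⟨hsx, hsS⟩), card_erase_of_mem h.center_mem]; lia : 1 < #T)
  have eq_of_adj {b g} (hb : b ∈ T) (hg : g ∈ T) (hxb : G.Adj x b) (hsg : G.Adj s g) :
      S = {x, s, b, g} := by
    ext z
    simp only [mem_insert, mem_singleton]
    refine ⟨fun hz ↦ ?_, by grind⟩
    by_cases hzT : z ∈ T
    · obtain hz | hz := adj_or_adj hzT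
      · simp [center_nbr_unique hzT hb hz hxb]
      · simp [foot_nbr_unique hzT hg hz hsg]
    · grind
  obtain hxp | hsp := adj_or_adj hp <;> obtain hxq | hsq := adj_or_adj hq
  · exact absurd (center_nbr_unique hp hq hxp hxq) hpq
  · exact ⟨p, q, eq_of_adj hp hq hxp hsq, hxp, hsq⟩
  · exact ⟨q, p, eq_of_adj hq hp hxq hsp, hxq, hsp⟩
  · exact absurd (foot_nbr_unique hp hq hsp hsq) hpq

lemma coverVertices_subset_of_five_le (h : IsSpider G S x) (hS : 5 ≤ #S) :
    coverVertices G S ⊆ {x} := fun s hs ↦ by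
  rw [mem_singleton]
  by_contra hsx
  obtain ⟨b, g, rfl, -, -⟩ := h.exists_path_of_mem_coverVertices (by lia) hs hsx
  exact absurd (card_le_four (a := x) (b := s) (c := b) (d := g)) (by lia)

lemma isQuad (h : IsSpider G S x) (hS : #S = 4) : IsQuad G S := by
  by_cases hx : coverVertices G S ⊆ {x}
  · have hle := (card_le_card hx).trans_eq (card_singleton x)
    exact ⟨hS, by lia, fun w _ ↦ (card_filter_le _ _).trans hle⟩
  obtain ⟨s, hs, hsx⟩ := not_subset.1 hx
  rw [mem_singleton] at hsx
  obtain ⟨b, g, rfl, hxb, hsg⟩ := h.exists_path_of_mem_coverVertices hS.ge hs hsx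
  have hxs := h.adj_of_mem_coverVertices hS.ge hs hsx
  have hdistinct : s ≠ b ∧ x ≠ g ∧ b ≠ g := by grind
  have hsub : coverVertices G {x, s, b, g} ⊆ {x, s} := fun t ht ↦ by
    obtain ⟨ht, htS⟩ := mem_filter.1 ht
    rw [isDissoc_iff] at htS
    have htb : t ≠ b := by rintro rfl; grind [G.adj_comm]
    have htg : t ≠ g := by rintro rfl; grind [G.adj_comm]
    grind
  refine ⟨hS, (card_le_card hsub).trans card_le_two, fun w hw ↦ card_le_one.2 fun t ht t' ht' ↦ ?_⟩
  have eq_of_admits_center (hxw : x ∈ admittingVertices G {x, s, b, g} w) : w = x ∨ w = b := by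
    obtain hxw | ⟨-, hxw⟩ := (mem_filter.1 hxw).2
    · exact .inl hxw.symm
    · have hws := hxw s (by grind)
      have hwg := hxw g (by grind)
      grind [G.adj_comm]
  have eq_of_admits_foot (hsw : s ∈ admittingVertices G {x, s, b, g} w) : w = s ∨ w = g := by
    obtain hsw | ⟨-, hsw⟩ := (mem_filter.1 hsw).2
    · exact .inl hsw.symm
    · have hwx := hsw x (by grind)
      have hwb := hsw b (by grind)
      grind [G.adj_comm]
  have mem_pair {r} (hr : r ∈ admittingVertices G {x, s, b, g} w) : r = x ∨ r = s := by
    simpa only [mem_insert, mem_singleton] using hsub (mem_filter.1 hr).1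
  grind

lemma isCluster (h : IsSpider G S x) (hS : 3 ≤ #S) : IsCluster G S := by
  obtain hS | hS | hS : #S = 3 ∨ #S = 4 ∨ 5 ≤ #S := by lia
  · exact .inl (h.isCherry hS)
  · exact .inr (.inl (h.isQuad hS))
  · exact .inr (.inr ⟨hS, card_le_card (h.coverVertices_subset_of_five_le hS)⟩)

end IsSpider

end Spider

section Forest

open Finset

variable {G : SimpleGraph V} {A C S : Finset V} {a b u v x z : V} {parent : V → V}
  {depth : V → ℕ}

/-- The edges of `G` outside `G[C]` form a forest hanging from the vertex `u` of `C`: every vertex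
outside `C` is joined to its parent, which is less deep, and these are the only edges not in `C`.
The values of `parent` and `depth` on `C` are irrelevant. -/
structure HangingForest (G : SimpleGraph V) (C : Finset V) (u : V) (parent : V → V)
    (depth : V → ℕ) : Prop where
  root_mem : u ∈ C
  adj_parent : ∀ v, v ∉ C → G.Adj v (parent v)
  depth_parent_lt : ∀ v, v ∉ C → depth (parent v) < depth v
  adj_cases : ∀ a b, G.Adj a b →
    (a ∈ C ∧ b ∈ C) ∨ (a ∉ C ∧ b = parent a) ∨ (b ∉ C ∧ a = parent b)
  parent_eq_root : ∀ v, v ∉ C → parent v ∈ C → parent v = u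

/-- `A` contains `C` and, with every vertex outside `C`, its parent. -/
structure IsParentClosed (C : Finset V) (parent : V → V) (A : Finset V) : Prop where
  subset : C ⊆ A
  parent_mem : ∀ v ∈ A, v ∉ C → parent v ∈ A

/-- `a` is a child of `x` in the part of the forest that lies in `A`. -/
def IsChild (C : Finset V) (parent : V → V) (A : Finset V) (x a : V) : Prop :=
  a ∈ A ∧ a ∉ C ∧ parent a = x

/-- The forest vertex `x` has at least two proper descendants within distance two in `A`. -/
def IsHeavy (C : Finset V) (parent : V → V) (A : Finset V) (x : V) : Prop :=
  x ∈ A ∧ x ∉ C ∧ ((∃ a b, IsChild C parent A x a ∧ IsChild C parent A x b ∧ a ≠ b) ∨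
    ∃ a b, IsChild C parent A x a ∧ IsChild C parent A a b)

/-- `x` together with its children and grandchildren in `A`. -/
noncomputable def subtree (C : Finset V) (parent : V → V) (A : Finset V) (x : V) : Finset V :=
  {z ∈ A | z = x ∨ IsChild C parent A x z ∨ ∃ a, IsChild C parent A x a ∧ IsChild C parent A a z}

/-- A heavy vertex none of whose descendants is heavy, so that its full subtree consists of children
and grandchildren only. -/
structure IsLowestHeavy (C : Finset V) (parent : V → V) (A : Finset V) (x : V) : Prop where
  isHeavy : IsHeavy C parent A x
  grandchild_unique : ∀ a, IsChild C parent A x a →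
    ∀ b c, IsChild C parent A a b → IsChild C parent A a c → b = c
  not_isChild_grandchild : ∀ a, IsChild C parent A x a → ∀ b, IsChild C parent A a b →
    ∀ c, ¬IsChild C parent A b c

lemma isDissoc_of_card_le_two (hS : #S ≤ 2) : IsDissoc G S :=
  isDissoc_iff.2 fun v hv a ha b hb hva hvb ↦ by
    by_contra hab
    have hcard : #{v, a, b} = 3 := card_eq_three.2 ⟨v, a, b, hva.ne, hvb.ne, hab, rfl⟩
    have hsub : {v, a, b} ⊆ S := by grind
    exact absurd (card_le_card hsub) (by lia)

lemma mem_subtree_of_isChild (h : IsChild C parent A x a) : a ∈ subtree C parent A x :=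
  mem_filter.2 ⟨h.1, .inr (.inl h)⟩

lemma mem_subtree_of_isChild_of_isChild (ha : IsChild C parent A x a)
    (hb : IsChild C parent A a b) : b ∈ subtree C parent A x :=
  mem_filter.2 ⟨hb.1, .inr (.inr ⟨a, ha, hb⟩)⟩

namespace IsLowestHeavy

lemma mem_subtree (h : IsLowestHeavy C parent A x) : x ∈ subtree C parent A x :=
  mem_filter.2 ⟨h.isHeavy.1, .inl rfl⟩

lemma notMem_of_mem_subtree (h : IsLowestHeavy C parent A x) (hz : z ∈ subtree C parent A x) :
    z ∉ C := by
  obtain rfl | hz | ⟨a, -, hz⟩ := (mem_filter.1 hz).2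
  exacts [h.isHeavy.2.1, hz.2.1, hz.2.1]

lemma isParentClosed_sdiff_subtree (h : IsLowestHeavy C parent A x)
    (hA : IsParentClosed C parent A) : IsParentClosed C parent (A \ subtree C parent A x) where
  subset z hz := mem_sdiff.2 ⟨hA.subset hz, fun hz' ↦ h.notMem_of_mem_subtree hz' hz⟩
  parent_mem v hv hvC := by
    obtain ⟨hvA, hv⟩ := mem_sdiff.1 hv
    refine mem_sdiff.2 ⟨hA.parent_mem v hvA hvC, fun hp ↦ ?_⟩
    have hchild : IsChild C parent A (parent v) v := ⟨hvA, hvC, rfl⟩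
    obtain hp | hp | ⟨a, ha, hp⟩ := (mem_filter.1 hp).2
    · exact hv (mem_subtree_of_isChild (hp ▸ hchild))
    · exact hv (mem_subtree_of_isChild_of_isChild hp hchild)
    · exact h.not_isChild_grandchild a ha _ hp v hchild

end IsLowestHeavy

namespace HangingForest

lemma depth_lt (hF : HangingForest G C u parent depth) (h : IsChild C parent A x a) :
    depth x < depth a :=
  h.2.2 ▸ hF.depth_parent_lt a h.2.1

lemma adj_of_isChild (hF : HangingForest G C u parent depth) (h : IsChild C parent A x a) :
    G.Adj x a :=
  h.2.2 ▸ (hF.adj_parent a h.2.1).symm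

lemma eq_parent_or_isChild (hF : HangingForest G C u parent depth) (hv : v ∉ C) (ha : a ∈ A)
    (hva : G.Adj v a) : a = parent v ∨ IsChild C parent A v a := by
  obtain h | h | h := hF.adj_cases v a hva
  exacts [absurd h.1 hv, .inl h.2, .inr ⟨ha, h.1, h.2.symm⟩]

lemma exists_isLowestHeavy (hF : HangingForest G C u parent depth)
    (h : ∃ x, IsHeavy C parent A x) : ∃ x, IsLowestHeavy C parent A x := by
  obtain ⟨x₀, hx₀⟩ := h
  obtain ⟨x, hx, hmax⟩ := exists_max_image {x ∈ A | IsHeavy C parent A x} depth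
    ⟨x₀, mem_filter.2 ⟨hx₀.1, hx₀⟩⟩
  have not_isHeavy {a} (ha : IsChild C parent A x a) : ¬IsHeavy C parent A a := fun h ↦
    (hF.depth_lt ha).not_ge (hmax a (mem_filter.2 ⟨h.1, h⟩))
  refine ⟨x, (mem_filter.1 hx).2, fun a ha b c hb hc ↦ ?_, fun a ha b hb c hc ↦ ?_⟩
  · by_contra hbc
    exact not_isHeavy ha ⟨ha.1, ha.2.1, .inl ⟨b, c, hb, hc, hbc⟩⟩
  · exact not_isHeavy ha ⟨ha.1, ha.2.1, .inr ⟨b, c, hb, hc⟩⟩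

lemma isSpider_subtree (hF : HangingForest G C u parent depth) (h : IsLowestHeavy C parent A x) :
    IsSpider G (subtree C parent A x) x where
  center_mem := h.mem_subtree
  isDissoc_erase := isDissoc_iff.2 fun v hv a ha b hb hva hvb ↦ by
    obtain ⟨hvx, hv⟩ := mem_erase.1 hv
    obtain ⟨hax, ha⟩ := mem_erase.1 ha
    obtain ⟨hbx, hb⟩ := mem_erase.1 hb
    have hvC := h.notMem_of_mem_subtree hv
    have ha' := hF.eq_parent_or_isChild hvC (mem_filter.1 ha).1 hva
    have hb' := hF.eq_parent_or_isChild hvC (mem_filter.1 hb).1 hvb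
    obtain hv | hv | ⟨w, hw, hv⟩ := (mem_filter.1 hv).2
    · exact absurd hv hvx
    · exact h.grandchild_unique v hv a b (ha'.resolve_left (hv.2.2 ▸ hax))
        (hb'.resolve_left (hv.2.2 ▸ hbx))
    · exact (ha'.resolve_right (h.not_isChild_grandchild w hw v hv a)).trans
        (hb'.resolve_right (h.not_isChild_grandchild w hw v hv b)).symm
  eq_or_adj_or z hz := by
    obtain hz | hz | ⟨a, ha, hz⟩ := (mem_filter.1 hz).2
    · exact .inl hz
    · exact .inr (.inl (hF.adj_of_isChild hz))
    · exact .inr (.inr ⟨a, mem_subtree_of_isChild ha, hF.adj_of_isChild ha, hF.adj_of_isChild hz⟩)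

lemma not_isDissoc_subtree (hF : HangingForest G C u parent depth)
    (h : IsLowestHeavy C parent A x) : ¬IsDissoc G (subtree C parent A x) := fun hS ↦ by
  rw [isDissoc_iff] at hS
  obtain ⟨a, b, ha, hb, hab⟩ | ⟨a, b, ha, hb⟩ := h.isHeavy.2.2
  · exact hab (hS x h.mem_subtree a (mem_subtree_of_isChild ha) b (mem_subtree_of_isChild hb)
      (hF.adj_of_isChild ha) (hF.adj_of_isChild hb))
  · have hxb := hS a (mem_subtree_of_isChild ha) x h.mem_subtree b
      (mem_subtree_of_isChild_of_isChild ha hb) (hF.adj_of_isChild ha).symm (hF.adj_of_isChild hb)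
    exact ((hF.depth_lt ha).trans (hF.depth_lt hb)).ne (congrArg depth hxb)

lemma attachedAt_subtree (hF : HangingForest G C u parent depth)
    (h : IsLowestHeavy C parent A x) (hA : IsParentClosed C parent A) :
    AttachedAt G (A \ subtree C parent A x) (subtree C parent A x) x (parent x) where
  disjoint := sdiff_disjoint
  mem_left := h.mem_subtree
  mem_right := by
    have hlt := hF.depth_parent_lt x h.isHeavy.2.1
    refine mem_sdiff.2 ⟨hA.parent_mem x h.isHeavy.1 h.isHeavy.2.1, fun hp ↦ ?_⟩
    obtain hp | hp | ⟨a, ha, hp⟩ := (mem_filter.1 hp).2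
    · exact hlt.ne (congrArg depth hp)
    · exact hlt.not_gt (hF.depth_lt hp)
    · exact hlt.not_gt ((hF.depth_lt ha).trans (hF.depth_lt hp))
  adj := hF.adj_parent x h.isHeavy.2.1
  eq_of_adj p hp q hq hpq := by
    have hpS := (mem_sdiff.1 hp).2
    obtain hp' | hp' := hF.eq_parent_or_isChild (h.notMem_of_mem_subtree hq) (mem_sdiff.1 hp).1
      hpq.symm
    · obtain rfl | hq | ⟨a, ha, hq⟩ := (mem_filter.1 hq).2
      · exact ⟨hp', rfl⟩
      · exact absurd (hp'.trans hq.2.2 ▸ h.mem_subtree) hpS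
      · exact absurd (hp'.trans hq.2.2 ▸ mem_subtree_of_isChild ha) hpS
    · have hq' := (h.isParentClosed_sdiff_subtree hA).parent_mem p hp hp'.2.1
      exact absurd hq (hp'.2.2 ▸ (mem_sdiff.1 hq').2)
  isDissoc_erase := (hF.isSpider_subtree h).isDissoc_erase
  not_isDissoc := hF.not_isDissoc_subtree h

lemma isCluster_subtree (hF : HangingForest G C u parent depth)
    (h : IsLowestHeavy C parent A x) : IsCluster G (subtree C parent A x) := by
  refine (hF.isSpider_subtree h).isCluster ?_
  by_contra! hcard
  exact hF.not_isDissoc_subtree h (isDissoc_of_card_le_two (by lia))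

lemma exists_clusterDecomp (hF : HangingForest G C u parent depth)
    (hA : IsParentClosed C parent A) : ∃ K P, ClusterDecomp G K A P ∧
      IsParentClosed C parent K ∧ ∀ x, ¬IsHeavy C parent K x := by
  induction hn : #A using Nat.strong_induction_on generalizing A with
  | _ n ih =>
    by_cases hx : ∃ x, IsHeavy C parent A x
    · obtain ⟨x, hx⟩ := hF.exists_isLowestHeavy hx
      have hsub : subtree C parent A x ⊆ A := filter_subset _ _
      obtain ⟨K, P, hKP, hK, hlight⟩ := ih _
        (hn ▸ card_lt_card (sdiff_ssubset hsub ⟨x, hx.mem_subtree⟩))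
        (hx.isParentClosed_sdiff_subtree hA) rfl
      refine ⟨K, insert (subtree C parent A x) P, ?_, hK, hlight⟩
      have hattach := hKP.attach (hF.attachedAt_subtree hx hA) (hF.isCluster_subtree hx)
      rwa [sdiff_union_of_subset hsub] at hattach
    · exact ⟨A, ∅, .core, hA, not_exists.1 hx⟩

end HangingForest

end Forest

section Core

open Finset

variable {G : SimpleGraph V} {C D K : Finset V} {l u x y z : V} {parent : V → V}
  {depth : V → ℕ} {j N : ℕ} {p : Finset V → Prop}

lemma coverCount_le_of_minP3Covers_subset (h : minP3Covers G K ⊆ minP3Covers G C) :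
    coverCount G K p ≤ coverCount G C p :=
  card_le_card (filter_subset_filter p h)

lemma card_minP3Covers_le_coverCount (h : minP3Covers G K ⊆ minP3Covers G C)
    (hp : ∀ D ∈ minP3Covers G K, p D) : #(minP3Covers G K) ≤ coverCount G C p :=
  card_le_card fun D hD ↦ mem_minP3CoversWith.2 ⟨h hD, hp D hD⟩

namespace HangingForest

lemma eq_root_of_adj (hF : HangingForest G C u parent depth) (hy : y ∈ C) (hx : x ∉ C)
    (hxy : G.Adj x y) : y = u := by
  obtain h | h | h := hF.adj_cases x y hxy
  · exact absurd h.1 hx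
  · exact h.2 ▸ hF.parent_eq_root x hx (h.2 ▸ hy)
  · exact absurd hy h.1

lemma parent_eq_root_or (hF : HangingForest G C u parent depth) (hK : IsParentClosed C parent K)
    (hlight : ∀ x, ¬IsHeavy C parent K x) (hz : z ∈ K) (hzC : z ∉ C) :
    parent z = u ∨ parent z ∈ K ∧ parent z ∉ C ∧ parent (parent z) = u := by
  refine or_iff_not_imp_left.2 fun hzu ↦ ?_
  have hpC : parent z ∉ C := fun h ↦ hzu (hF.parent_eq_root z hzC h)
  have hpK := hK.parent_mem z hz hzC
  refine ⟨hpK, hpC, by_contra fun hne ↦ ?_⟩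
  have hppC : parent (parent z) ∉ C := fun h ↦ hne (hF.parent_eq_root _ hpC h)
  exact hlight _ ⟨hK.parent_mem _ hpK hpC, hppC, .inr ⟨parent z, z, ⟨hpK, hpC, rfl⟩, hz, hzC, rfl⟩⟩

lemma isDissoc_sdiff_of_root_mem (hF : HangingForest G C u parent depth)
    (hK : IsParentClosed C parent K) (hlight : ∀ x, ¬IsHeavy C parent K x) (huD : u ∈ D)
    (hD : IsDissoc G (C \ D)) : IsDissoc G (K \ D) := by
  refine isDissoc_iff.2 fun v hv a ha b hb hva hvb ↦ ?_
  obtain ⟨hvK, hvD⟩ := mem_sdiff.1 hv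
  obtain ⟨haK, haD⟩ := mem_sdiff.1 ha
  obtain ⟨hbK, hbD⟩ := mem_sdiff.1 hb
  by_cases hvC : v ∈ C
  · have mem_cycle {a} (hva : G.Adj v a) : a ∈ C := by_contra fun haC ↦
      hvD (hF.eq_root_of_adj hvC haC hva.symm ▸ huD)
    exact isDissoc_iff.1 hD v (mem_sdiff.2 ⟨hvC, hvD⟩) a (mem_sdiff.2 ⟨mem_cycle hva, haD⟩)
      b (mem_sdiff.2 ⟨mem_cycle hvb, hbD⟩) hva hvb
  have ha' := hF.eq_parent_or_isChild hvC haK hva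
  have hb' := hF.eq_parent_or_isChild hvC hbK hvb
  obtain hvu | ⟨hpK, hpC, -⟩ := hF.parent_eq_root_or hK hlight hvK hvC
  · have ne_parent {a} (haD : a ∉ D) : a ≠ parent v := by rintro rfl; exact haD (hvu ▸ huD)
    by_contra hab
    exact hlight v ⟨hvK, hvC, .inl ⟨a, b, ha'.resolve_left (ne_parent haD),
      hb'.resolve_left (ne_parent hbD), hab⟩⟩
  · have not_isChild (a) : ¬IsChild C parent K v a := fun ha ↦
      hlight (parent v) ⟨hpK, hpC, .inr ⟨v, a, ⟨hvK, hvC, rfl⟩, ha⟩⟩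
    exact (ha'.resolve_right (not_isChild a)).trans (hb'.resolve_right (not_isChild b)).symm

lemma minP3Covers_subset (hF : HangingForest G C u parent depth)
    (hK : IsParentClosed C parent K) (hlight : ∀ x, ¬IsHeavy C parent K x)
    (hu : ∃ D ∈ minP3Covers G C, u ∈ D) : minP3Covers G K ⊆ minP3Covers G C := fun D hD ↦ by
  obtain ⟨-, hDK, hmin⟩ := mem_minP3Covers.1 hD
  obtain ⟨D₀, hD₀, huD₀⟩ := hu
  obtain ⟨hD₀C, hdiss, hmin₀⟩ := mem_minP3Covers.1 hD₀
  have hle := hmin D₀ (hD₀C.trans hK.subset)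
    (hF.isDissoc_sdiff_of_root_mem hK hlight huD₀ hdiss)
  have hDC : IsDissoc G (C \ (D ∩ C)) := by
    rw [sdiff_inter_self_right]
    exact hDK.mono (sdiff_subset_sdiff hK.subset le_rfl)
  have hinter : D ∩ C = D :=
    eq_of_subset_of_card_le inter_subset_left (hle.trans (hmin₀ _ inter_subset_right hDC))
  rw [hinter] at hDC
  exact mem_minP3Covers.2 ⟨inter_eq_left.1 hinter, hDC, fun E hE hE' ↦ hle.trans (hmin₀ E hE hE')⟩

lemma root_mem_of_one_lt_card (hF : HangingForest G C u parent depth)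
    (hK : IsParentClosed C parent K) (hlight : ∀ x, ¬IsHeavy C parent K x)
    (hcard : 1 < #(K \ C)) (hDC : D ⊆ C) (hD : IsDissoc G (K \ D)) : u ∈ D := by
  by_contra huD
  rw [isDissoc_iff] at hD
  have hu : u ∈ K \ D := mem_sdiff.2 ⟨hK.subset hF.root_mem, huD⟩
  have kept {z} (hz : z ∈ K) (hzC : z ∉ C) : z ∈ K \ D := mem_sdiff.2 ⟨hz, fun h ↦ hzC (hDC h)⟩
  have adj_root {z} (hz : z ∈ K) (hzC : z ∉ C) : G.Adj u z := by
    have hadj := (hF.adj_parent z hzC).symm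
    obtain hzu | ⟨hpK, hpC, hpu⟩ := hF.parent_eq_root_or hK hlight hz hzC
    · rwa [hzu] at hadj
    · have hadj' := hF.adj_parent _ hpC
      rw [hpu] at hadj'
      have hzu := hD _ (kept hpK hpC) z (kept hz hzC) u hu hadj hadj'
      exact absurd (hzu ▸ hF.root_mem) hzC
  obtain ⟨a, ha, b, hb, hab⟩ := one_lt_card.1 hcard
  obtain ⟨ha, haC⟩ := mem_sdiff.1 ha
  obtain ⟨hb, hbC⟩ := mem_sdiff.1 hb
  exact hab (hD u hu a (kept ha haC) b (kept hb hbC) (adj_root ha haC) (adj_root hb hbC))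

lemma adj_root_of_sdiff_eq_singleton (hF : HangingForest G C u parent depth)
    (hK : IsParentClosed C parent K) (hlight : ∀ x, ¬IsHeavy C parent K x) (hl : K \ C = {l}) :
    G.Adj u l := by
  obtain ⟨hlK, hlC⟩ := mem_sdiff.1 (hl ▸ mem_singleton_self l)
  have hadj := (hF.adj_parent l hlC).symm
  obtain h | ⟨hpK, hpC, -⟩ := hF.parent_eq_root_or hK hlight hlK hlC
  · rwa [h] at hadj
  · exact absurd (mem_singleton.1 (hl ▸ mem_sdiff.2 ⟨hpK, hpC⟩)) hadj.ne

lemma pendantCore (hF : HangingForest G C u parent depth) (hC : RootedCore G C u j)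
    (hK : IsParentClosed C parent K) (hlight : ∀ x, ¬IsHeavy C parent K x)
    (hsub : minP3Covers G K ⊆ minP3Covers G C) (hl : K \ C = {l}) : PendantCore G K u j := by
  have hul := hF.adj_root_of_sdiff_eq_singleton hK hlight hl
  obtain ⟨hlK, hlC⟩ := mem_sdiff.1 (hl ▸ mem_singleton_self l)
  have leaf_kept {D} (hD : D ∈ minP3Covers G K) : l ∈ K \ D :=
    mem_sdiff.2 ⟨hlK, fun h ↦ hlC (subset_of_mem_minP3Covers (hsub hD) h)⟩
  refine ⟨fun y hy x hx hxy D hD hadm ↦ ?_, ?_,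
    (coverCount_le_of_minP3Covers_subset hsub).trans hC.coverCount_root_le⟩
  · by_cases hyC : y ∈ C
    · obtain rfl := hF.eq_root_of_adj hyC (fun h ↦ hx (hK.subset h)) hxy
      exact hadm.resolve_right fun hiso ↦ hiso.2 l (leaf_kept hD) hul
    · obtain rfl : y = l := mem_singleton.1 (hl ▸ mem_sdiff.2 ⟨hy, hyC⟩)
      have hiso := hadm.resolve_left (mem_sdiff.1 (leaf_kept hD)).2
      by_contra huD
      exact hiso.2 u (mem_sdiff.2 ⟨hK.subset hF.root_mem, huD⟩) hul.symm
  · have admits_root (D) (hD : D ∈ minP3Covers G K) : AdmitsNbr G C D u :=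
      or_iff_not_imp_left.2 fun huD ↦ (isDissoc_sdiff_of_mem_minP3Covers hD).isolatedIn_of_adj
        (sdiff_subset_sdiff hK.subset le_rfl) (mem_sdiff.2 ⟨hF.root_mem, huD⟩) (leaf_kept hD)
        (fun h ↦ hlC (mem_sdiff.1 h).1) hul
    have hle := card_minP3Covers_le_coverCount hsub admits_root
    rw [coverCount_admitsNbr] at hle
    have hroot := hC.coverCount_root_le
    have hiso := hC.coverCount_isolatedIn_root_le
    lia

theorem pottedBound [Fintype V] (hF : HangingForest G C u parent depth)
    (hC : RootedCore G C u j) (hu : ∃ D ∈ minP3Covers G C, u ∈ D)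
    (hN : Fintype.card V = #C + N) : PottedBound j N #(minP3Covers G univ) := by
  obtain ⟨K, P, hKP, hK, hlight⟩ := hF.exists_clusterDecomp
    (A := univ) ⟨subset_univ C, fun v _ _ ↦ mem_univ _⟩
  have hsub := hF.minP3Covers_subset hK hlight hu
  have hcard := hKP.card_eq
  rw [card_univ, hN] at hcard
  have hKC := card_sdiff_add_card_eq_card hK.subset
  obtain hlt | hone | hzero : 1 < #(K \ C) ∨ #(K \ C) = 1 ∨ #(K \ C) = 0 := by lia
  · refine hKP.pottedBound ?_ (by lia)
    refine (card_minP3Covers_le_coverCount hsub fun D hD ↦ ?_).trans hC.coverCount_root_le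
    exact hF.root_mem_of_one_lt_card hK hlight hlt (subset_of_mem_minP3Covers (hsub hD))
      (isDissoc_sdiff_of_mem_minP3Covers hD)
  · obtain ⟨l, hl⟩ := card_eq_one.1 hone
    exact (hF.pendantCore hC hK hlight hsub hl).pottedBound hKP hC.one_le (by lia)
  · obtain rfl : K = C := (sdiff_eq_empty_iff_subset.1 (card_eq_zero.1 hzero)).antisymm hK.subset
    exact hC.pottedBound hKP (by lia)

end HangingForest

end Core

section Windows

open Finset

variable {n j : ℕ} {i s x : ZMod n} {E : Finset (ZMod n)}

/-- `E` meets every window `{i, i + 1, i + 2}` of three consecutive residues. -/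
def IsHitting (E : Finset (ZMod n)) : Prop := ∀ i, i ∈ E ∨ i + 1 ∈ E ∨ i + 2 ∈ E

/-- The number of elements of `E` in the window `{i, i + 1, i + 2}`. -/
noncomputable def windowCount (E : Finset (ZMod n)) (i : ZMod n) : ℕ :=
  (if i ∈ E then 1 else 0) + (if i + 1 ∈ E then 1 else 0) + (if i + 2 ∈ E then 1 else 0)

/-- The arithmetic progression `s, s + 3, …, s + 3 * j` modulo `n`. -/
noncomputable def progression (n j : ℕ) (s : ZMod n) : Finset (ZMod n) :=
  (range (j + 1)).image fun t ↦ s + (3 * t : ℕ)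

lemma mem_progression : x ∈ progression n j s ↔ ∃ t ≤ j, s + (3 * t : ℕ) = x := by
  simp only [progression, mem_image, mem_range, Order.lt_add_one_iff]

lemma sum_windowCount [NeZero n] (E : Finset (ZMod n)) : ∑ i, windowCount E i = 3 * #E := by
  have hshift (c : ZMod n) : ∑ i, (if i + c ∈ E then 1 else 0) = #E := by
    refine (Equiv.sum_comp (Equiv.addRight c) fun i ↦ if i ∈ E then 1 else 0).trans ?_
    simp only [sum_boole, filter_univ_mem, Nat.cast_id]
  have hzero := hshift 0
  simp only [add_zero] at hzero
  simp only [windowCount, sum_add_distrib, hshift, hzero]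
  ring

lemma IsHitting.one_le_windowCount (hE : IsHitting E) (i : ZMod n) : 1 ≤ windowCount E i := by
  have hi := hE i
  grind [windowCount]

lemma IsHitting.le_three_mul_card [NeZero n] (hE : IsHitting E) : n ≤ 3 * #E := by
  rw [← sum_windowCount]
  simpa [ZMod.card] using sum_le_sum fun i (_ : i ∈ univ) ↦ hE.one_le_windowCount i

lemma natCast_ne_zero_of_lt {a n : ℕ} (ha : a ≠ 0) (han : a < n) : (a : ZMod n) ≠ 0 := fun h ↦
  ha (Nat.eq_zero_of_dvd_of_lt ((ZMod.natCast_eq_zero_iff a n).1 h) han)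

lemma card_progression (h : 3 * j < n) (s : ZMod n) : #(progression n j s) = j + 1 := by
  rw [progression, card_image_of_injOn, card_range]
  intro a ha b hb hab
  simp only [coe_range, Set.mem_Iio] at ha hb
  have hmod := (ZMod.natCast_eq_natCast_iff' _ _ _).1 (add_left_cancel hab)
  rw [Nat.mod_eq_of_lt (by lia), Nat.mod_eq_of_lt (by lia)] at hmod
  lia

lemma isHitting_progression (j : ℕ) (s : ZMod (3 * j + 2)) :
    IsHitting (progression (3 * j + 2) j s) := fun i ↦ by
  obtain ⟨m, hm, hi⟩ : ∃ m < 3 * j + 2, s + (m : ℕ) = i :=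
    ⟨(i - s).val, ZMod.val_lt _, by rw [ZMod.natCast_zmod_val]; ring⟩
  have mem_of_add_eq {a t : ℕ} (ht : t ≤ j) (h : m + a = 3 * t) :
      i + a ∈ progression (3 * j + 2) j s :=
    mem_progression.2 ⟨t, ht, by rw [← h, ← hi]; push_cast; ring⟩
  by_cases hlast : m = 3 * j + 1
  · have hs : i + 1 = s := by
      have hzero : ((3 * j + 2 : ℕ) : ZMod (3 * j + 2)) = 0 := ZMod.natCast_self _
      rw [← hi, hlast]
      push_cast at hzero ⊢
      linear_combination hzero
    exact .inr (.inl (mem_progression.2 ⟨0, by lia, by simp [hs]⟩))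
  · obtain h | h | h : m % 3 = 0 ∨ m % 3 = 1 ∨ m % 3 = 2 := by lia
    · exact .inl (by simpa using mem_of_add_eq (a := 0) (t := m / 3) (by lia) (by lia))
    · exact .inr (.inr (mem_of_add_eq (a := 2) (t := m / 3 + 1) (by lia) (by lia)))
    · exact .inr (.inl (by
        simpa using mem_of_add_eq (a := 1) (t := m / 3 + 1) (by lia) (by lia)))

lemma IsHitting.exists_windowCount_eq_two [NeZero n] (hE : IsHitting E) (h : 3 * #E = n + 1) :
    ∃ i₀, windowCount E i₀ = 2 ∧ ∀ i ≠ i₀, windowCount E i = 1 := by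
  have hsum : ∑ i, (windowCount E i - 1) = 1 := by
    have hadd : ∑ i, (windowCount E i - 1) + ∑ _i : ZMod n, 1 = ∑ i, windowCount E i := by
      rw [← sum_add_distrib]
      exact sum_congr rfl fun i _ ↦ Nat.sub_add_cancel (hE.one_le_windowCount i)
    rw [sum_windowCount, h, sum_const, card_univ, ZMod.card, smul_eq_mul] at hadd
    lia
  obtain ⟨i₀, -, hi₀⟩ := exists_ne_zero_of_sum_ne_zero (hsum.trans_ne one_ne_zero)
  have hrest := add_sum_erase univ (fun i ↦ windowCount E i - 1) (mem_univ i₀)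
  refine ⟨i₀, by lia, fun i hi ↦ ?_⟩
  have hzero := sum_eq_zero_iff.1 (by lia : ∑ i ∈ univ.erase i₀, (windowCount E i - 1) = 0) i
    (mem_erase.2 ⟨hi, mem_univ i⟩)
  have hpos := hE.one_le_windowCount i
  lia

lemma add_three_mem (hx : x ∈ E) (h₁ : windowCount E x = 1) (h₂ : windowCount E (x + 1) = 1) :
    x + 3 ∈ E := by
  have hone : x + 1 + 1 = x + 2 := by ring
  have htwo : x + 1 + 2 = x + 3 := by ring
  grind [windowCount]

lemma IsHitting.exists_eq_progression {E : Finset (ZMod (3 * j + 2))}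
    (hE : IsHitting E) (hcard : #E = j + 1) :
    ∃ s, E = progression (3 * j + 2) j s ∧ ∀ i, i + 2 ≠ s → windowCount E i = 1 := by
  obtain ⟨i₀, hi₀, heq_one⟩ := hE.exists_windowCount_eq_two (by lia)
  have start_mem : i₀ + 2 ∈ E := by
    have hprev := heq_one (i₀ - 1) fun h ↦
      natCast_ne_zero_of_lt (n := 3 * j + 2) one_ne_zero (by lia) (by simpa using h)
    rw [windowCount, sub_add_cancel, show i₀ - 1 + 2 = i₀ + 1 by ring] at hprev
    grind [windowCount]
  have mem_of_le (t : ℕ) (ht : t ≤ j) : i₀ + 2 + (3 * t : ℕ) ∈ E := by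
    induction t with
    | zero => simpa using start_mem
    | succ t ih =>
      have ne_start (a : ℕ) (ha : a ≠ 0) (hlt : a < 3 * j + 2) : i₀ + (a : ℕ) ≠ i₀ :=
        fun h ↦ natCast_ne_zero_of_lt ha hlt (add_eq_left.1 h)
      have hmem := add_three_mem (ih (by lia))
        (heq_one _ (by simpa [add_assoc] using ne_start (2 + 3 * t) (by lia) (by lia)))
        (heq_one _ (by simpa [add_assoc] using ne_start (2 + (3 * t + 1)) (by lia) (by lia)))
      convert hmem using 1
      push_cast
      ring
  refine ⟨i₀ + 2, (eq_of_subset_of_card_le (fun x hx ↦ ?_) ?_).symm, fun i hi ↦ ?_⟩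
  · obtain ⟨t, ht, rfl⟩ := mem_progression.1 hx
    exact mem_of_le t ht
  · rw [card_progression (by lia), hcard]
  · exact heq_one i fun h ↦ hi (by rw [h])

end Windows

section Cycle

open Finset

variable {G : SimpleGraph V} {n j : ℕ}

/-- `φ` enumerates, in cyclic order, the vertices of an induced cycle of `G`. -/
structure IsInducedCycle (G : SimpleGraph V) (φ : ZMod n → V) : Prop where
  injective : φ.Injective
  adj_iff : ∀ a b, G.Adj (φ a) (φ b) ↔ b = a + 1 ∨ a = b + 1

lemma IsInducedCycle.isDissoc_sdiff_iff [NeZero n] {φ : ZMod n → V} (hφ : IsInducedCycle G φ)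
    (hn : 2 < n) {E : Finset (ZMod n)} :
    IsDissoc G (univ.image φ \ E.image φ) ↔ IsHitting E := by
  have two_ne_zero : (2 : ZMod n) ≠ 0 := by
    simpa using natCast_ne_zero_of_lt (a := 2) two_ne_zero hn
  have mem_iff (i : ZMod n) : φ i ∈ univ.image φ \ E.image φ ↔ i ∉ E := by
    simp [hφ.injective.eq_iff]
  have mem_image {v : V} (hv : v ∈ univ.image φ \ E.image φ) : ∃ i ∉ E, φ i = v := by
    obtain ⟨i, -, rfl⟩ := Finset.mem_image.1 (mem_sdiff.1 hv).1
    exact ⟨i, (mem_iff i).1 hv, rfl⟩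
  rw [isDissoc_iff]
  constructor
  · intro h i
    by_contra! ⟨hzero, hone, htwo⟩
    have heq := hφ.injective <| h _ ((mem_iff _).2 hone) _ ((mem_iff _).2 hzero) _
      ((mem_iff _).2 htwo) ((hφ.adj_iff _ _).2 (.inr rfl)) ((hφ.adj_iff _ _).2 (.inl (by ring)))
    exact two_ne_zero (by linear_combination -heq)
  · intro h v hv a ha b hb hva hvb
    obtain ⟨v, hvE, rfl⟩ := mem_image hv
    obtain ⟨a, haE, rfl⟩ := mem_image ha
    obtain ⟨b, hbE, rfl⟩ := mem_image hb
    rw [hφ.adj_iff] at hva hvb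
    have two_neighbors (x : ZMod n) (hx : x ∉ E) (hv : v = x + 1) : v + 1 ∈ E := by
      have hwin := h x
      rw [show x + 2 = v + 1 by rw [hv]; ring, ← hv] at hwin
      tauto
    grind

section ModThree

variable {φ : ZMod (3 * j + 2) → V} {D : Finset V}

lemma IsInducedCycle.mem_minP3Covers_iff (hφ : IsInducedCycle G φ) (hj : 1 ≤ j) :
    D ∈ minP3Covers G (univ.image φ) ↔
      ∃ E, IsHitting E ∧ #E = j + 1 ∧ D = E.image φ := by
  have card_le {F : Finset V} (hF : F ⊆ univ.image φ) (hd : IsDissoc G (univ.image φ \ F)) :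
      ∃ E, IsHitting E ∧ j + 1 ≤ #E ∧ F = E.image φ := by
    obtain ⟨E, -, rfl⟩ := subset_image_iff.1 hF
    have hE := (hφ.isDissoc_sdiff_iff (by lia)).1 hd
    have hcard := hE.le_three_mul_card
    exact ⟨E, hE, by lia, rfl⟩
  rw [mem_minP3Covers]
  constructor
  · rintro ⟨hsub, hd, hmin⟩
    obtain ⟨E, hE, hcard, rfl⟩ := card_le hsub hd
    refine ⟨E, hE, hcard.antisymm' ?_, rfl⟩
    have hle := hmin _ (image_subset_image (subset_univ (progression (3 * j + 2) j 0)))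
      ((hφ.isDissoc_sdiff_iff (by lia)).2 (isHitting_progression j 0))
    rwa [card_image_of_injective _ hφ.injective, card_image_of_injective _ hφ.injective,
      card_progression (by lia)] at hle
  · rintro ⟨E, hE, hcard, rfl⟩
    refine ⟨image_subset_image (subset_univ E), (hφ.isDissoc_sdiff_iff (by lia)).2 hE,
      fun F hF hd ↦ ?_⟩
    obtain ⟨E', -, hcard', rfl⟩ := card_le hF hd
    rwa [card_image_of_injective _ hφ.injective, card_image_of_injective _ hφ.injective, hcard]

lemma IsInducedCycle.exists_eq_image_progression (hφ : IsInducedCycle G φ) (hj : 1 ≤ j)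
    (hD : D ∈ minP3Covers G (univ.image φ)) :
    ∃ s, D = (progression (3 * j + 2) j s).image φ := by
  obtain ⟨E, hE, hcard, rfl⟩ := (hφ.mem_minP3Covers_iff hj).1 hD
  obtain ⟨s, rfl, -⟩ := hE.exists_eq_progression hcard
  exact ⟨s, rfl⟩

lemma IsInducedCycle.card_minP3Covers_le (hφ : IsInducedCycle G φ) (hj : 1 ≤ j) :
    #(minP3Covers G (univ.image φ)) ≤ 3 * j + 2 := by
  have hsub : minP3Covers G (univ.image φ) ⊆
      univ.image fun s ↦ (progression (3 * j + 2) j s).image φ := fun D hD ↦ by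
    obtain ⟨s, rfl⟩ := hφ.exists_eq_image_progression hj hD
    exact mem_image_of_mem _ (mem_univ s)
  simpa [ZMod.card] using (card_le_card hsub).trans card_image_le

lemma IsInducedCycle.coverCount_mem_le (hφ : IsInducedCycle G φ) (hj : 1 ≤ j) :
    coverCount G (univ.image φ) (φ 0 ∈ ·) ≤ j + 1 := by
  have hsub : minP3CoversWith G (univ.image φ) (φ 0 ∈ ·) ⊆ (range (j + 1)).image fun t ↦
      (progression (3 * j + 2) j (-(3 * t : ℕ))).image φ := fun D hD ↦ by
    obtain ⟨hD, hmem⟩ := mem_minP3CoversWith.1 hD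
    obtain ⟨s, rfl⟩ := hφ.exists_eq_image_progression hj hD
    obtain ⟨t, ht, hs⟩ := mem_progression.1 ((hφ.injective.mem_finset_image).1 hmem)
    rw [eq_neg_of_add_eq_zero_left hs]
    exact mem_image_of_mem _ (mem_range.2 (by lia))
  simpa [coverCount] using (card_le_card hsub).trans card_image_le

lemma IsInducedCycle.coverCount_isolatedIn_le (hφ : IsInducedCycle G φ) (hj : 1 ≤ j) :
    coverCount G (univ.image φ) (fun D ↦ IsolatedIn G (univ.image φ \ D) (φ 0)) ≤ 1 := by
  suffices hsub : minP3CoversWith G (univ.image φ)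
      (fun D ↦ IsolatedIn G (univ.image φ \ D) (φ 0)) ⊆
        {(progression (3 * j + 2) j 1).image φ} from (card_le_card hsub).trans_eq (card_singleton _)
  intro D hD
  obtain ⟨hD, -, hisol⟩ := mem_minP3CoversWith.1 hD
  obtain ⟨E, hE, hcard, rfl⟩ := (hφ.mem_minP3Covers_iff hj).1 hD
  obtain ⟨s, hs, heq_one⟩ := hE.exists_eq_progression hcard
  have mem_of_adj (i : ZMod (3 * j + 2)) (hi : G.Adj (φ 0) (φ i)) : i ∈ E := by
    by_contra hiE
    exact hisol (φ i) (mem_sdiff.2 ⟨mem_image_of_mem φ (mem_univ i),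
      fun h ↦ hiE ((hφ.injective.mem_finset_image).1 h)⟩) hi
  have one_mem : 1 ∈ E := mem_of_adj 1 ((hφ.adj_iff _ _).2 (.inl (by ring)))
  have neg_one_mem : -1 ∈ E := mem_of_adj (-1) ((hφ.adj_iff _ _).2 (.inr (by ring)))
  have hwin : (-1 : ZMod (3 * j + 2)) + 2 = 1 := by ring
  have hs_one : s = 1 := by
    by_contra hne
    have hcount := heq_one (-1) (by rw [hwin]; exact fun h ↦ hne h.symm)
    grind [windowCount]
  rw [mem_singleton, hs, hs_one]

lemma IsInducedCycle.exists_mem_minP3Covers (hφ : IsInducedCycle G φ) (hj : 1 ≤ j) :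
    ∃ D ∈ minP3Covers G (univ.image φ), φ 0 ∈ D :=
  ⟨(progression (3 * j + 2) j 0).image φ,
    (hφ.mem_minP3Covers_iff hj).2
      ⟨_, isHitting_progression j 0, card_progression (by lia) 0, rfl⟩,
    mem_image_of_mem φ (mem_progression.2 ⟨0, Nat.zero_le j, by simp⟩)⟩

lemma IsInducedCycle.rootedCore (hφ : IsInducedCycle G φ) (hj : 1 ≤ j) {parent : V → V}
    {depth : V → ℕ} (hF : HangingForest G (univ.image φ) (φ 0) parent depth) :
    RootedCore G (univ.image φ) (φ 0) j where
  one_le := hj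
  root_mem := hF.root_mem
  eq_root_of_adj _ hy _ hx hxy := hF.eq_root_of_adj hy hx hxy
  card_minP3Covers_le := hφ.card_minP3Covers_le hj
  coverCount_root_le := hφ.coverCount_mem_le hj
  coverCount_isolatedIn_root_le := hφ.coverCount_isolatedIn_le hj

end ModThree

end Cycle

section Extraction

open Finset

variable {G : SimpleGraph V} {n : ℕ} {u v a b : V} {φ : ZMod n → V} {parent : V → V} {depth : V → ℕ}

lemma val_add_one_of_ne [NeZero n] (hn : 1 < n) {i : ZMod n} (hi : i.val + 1 ≠ n) :
    (i + 1).val = i.val + 1 := by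
  have hone : (1 : ZMod n).val = 1 := ZMod.val_one'' (by lia)
  have hlt := i.val_lt
  rw [ZMod.val_add_of_lt (by lia), hone]

lemma exists_enumeration_of_isCycle [NeZero n] {c : G.Walk u u} (hc : c.IsCycle)
    (hlen : c.length = n) :
    ∃ φ : ZMod n → V, φ 0 = u ∧ φ.Injective ∧ (∀ i, φ i ∈ c.support) ∧
      ∀ i, G.Adj (φ i) (φ (i + 1)) := by
  have hn : 3 ≤ n := hlen ▸ hc.three_le_length
  refine ⟨fun i ↦ c.getVert i.val, by simp, fun a b hab ↦ ?_,
    fun i ↦ c.getVert_mem_support _, fun i ↦ ?_⟩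
  · have ha := a.val_lt
    have hb := b.val_lt
    exact ZMod.val_injective n (hc.getVert_injOn' (by simp only [Set.mem_ofPred_eq]; lia)
      (by simp only [Set.mem_ofPred_eq]; lia) hab)
  · have hadj := c.adj_getVert_succ (i := i.val) (hlen ▸ i.val_lt)
    by_cases hi : i.val + 1 = n
    · have hzero : i + 1 = 0 := by
        have hcast : ((i.val + 1 : ℕ) : ZMod n) = 0 := by rw [hi, ZMod.natCast_self]
        rwa [Nat.cast_add, ZMod.natCast_zmod_val, Nat.cast_one] at hcast
      have hend : c.getVert n = u := hlen ▸ c.getVert_length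
      rw [hi, hend] at hadj
      simpa [hzero] using hadj
    · rwa [← val_add_one_of_ne (by lia) hi] at hadj

lemma exists_adj_dist_lt (hG : G.Connected) (hv : v ≠ u) :
    ∃ p, G.Adj v p ∧ G.dist p u < G.dist v u := by
  obtain ⟨w, hw⟩ := hG.exists_walk_length_eq_dist v u
  cases w with
  | nil => exact absurd rfl hv
  | cons h q =>
    have hq := SimpleGraph.dist_le q
    rw [SimpleGraph.Walk.length_cons] at hw
    exact ⟨_, h, by lia⟩

/-- A spanning unicyclic subgraph of `G`: a cycle, enumerated by `φ` in cyclic order, together with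
an edge from every vertex off the cycle to its parent, which is less deep. -/
structure SpanningUnicycle [NeZero n] (G : SimpleGraph V) (φ : ZMod n → V) (parent : V → V)
    (depth : V → ℕ) : Prop where
  two_lt : 2 < n
  injective : φ.Injective
  adj_add_one : ∀ i, G.Adj (φ i) (φ (i + 1))
  adj_parent : ∀ v, v ∉ univ.image φ → G.Adj v (parent v)
  depth_parent_lt : ∀ v, v ∉ univ.image φ → depth (parent v) < depth v

/-- The edges of the cycle enumerated by `φ`. -/
noncomputable def cycleEdges [NeZero n] (φ : ZMod n → V) : Finset (Sym2 V) :=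
  univ.image fun i ↦ s(φ i, φ (i + 1))

/-- The edges from the vertices outside `C` to their parents. -/
noncomputable def parentEdges [Fintype V] (C : Finset V) (parent : V → V) : Finset (Sym2 V) :=
  Cᶜ.image fun v ↦ s(v, parent v)

namespace SpanningUnicycle

variable [NeZero n]

lemma two_ne_zero (h : SpanningUnicycle G φ parent depth) : (2 : ZMod n) ≠ 0 := by
  simpa using natCast_ne_zero_of_lt (a := 2) _root_.two_ne_zero h.two_lt

lemma card_image (h : SpanningUnicycle G φ parent depth) : #(univ.image φ) = n := by
  rw [card_image_of_injective _ h.injective, card_univ, ZMod.card]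

lemma card_cycleEdges (h : SpanningUnicycle G φ parent depth) : #(cycleEdges φ) = n := by
  rw [cycleEdges, card_image_of_injective, card_univ, ZMod.card]
  intro a b hab
  obtain ⟨hab, -⟩ | ⟨hab, hba⟩ := Sym2.eq_iff.1 hab
  · exact h.injective hab
  · have hab' := h.injective hab
    have hba' := h.injective hba
    exact (h.two_ne_zero (by linear_combination hba' - hab')).elim

lemma card_parentEdges [Fintype V] (h : SpanningUnicycle G φ parent depth) :
    #(parentEdges (univ.image φ) parent) + n = Fintype.card V := by
  rw [parentEdges, card_image_of_injOn, ← card_add_card_compl (univ.image φ), h.card_image,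
    add_comm]
  intro a ha b hb hab
  rw [mem_coe, mem_compl] at ha hb
  obtain ⟨hab, -⟩ | ⟨hab, hba⟩ := Sym2.eq_iff.1 hab
  · exact hab
  · have hlt := h.depth_parent_lt a ha
    have hlt' := h.depth_parent_lt b hb
    rw [hba] at hlt
    rw [← hab] at hlt'
    exact (lt_asymm hlt hlt').elim

lemma disjoint_cycleEdges_parentEdges [Fintype V] :
    Disjoint (cycleEdges φ) (parentEdges (univ.image φ) parent) := by
  refine disjoint_left.2 fun e hcycle hparent ↦ ?_
  obtain ⟨i, -, rfl⟩ := mem_image.1 hcycle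
  obtain ⟨v, hv, he⟩ := mem_image.1 hparent
  have hvC := mem_compl.1 hv
  obtain ⟨rfl, -⟩ | ⟨rfl, -⟩ := Sym2.eq_iff.1 he
  · exact hvC (mem_image_of_mem φ (mem_univ _))
  · exact hvC (mem_image_of_mem φ (mem_univ _))

lemma edgeSet_eq [Fintype V] (h : SpanningUnicycle G φ parent depth)
    (hcard : G.edgeSet.ncard = Nat.card V) :
    G.edgeSet = ↑(cycleEdges φ ∪ parentEdges (univ.image φ) parent) := by
  refine (Set.eq_of_subset_of_ncard_le (fun e he ↦ ?_) ?_).symm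
  · obtain he | he := mem_union.1 (mem_coe.1 he)
    · obtain ⟨i, -, rfl⟩ := mem_image.1 he
      exact h.adj_add_one i
    · obtain ⟨v, hv, rfl⟩ := mem_image.1 he
      exact h.adj_parent v (mem_compl.1 hv)
  · rw [hcard, Set.ncard_coe_finset, card_union_of_disjoint disjoint_cycleEdges_parentEdges,
      Nat.card_eq_fintype_card, h.card_cycleEdges, ← h.card_parentEdges, add_comm]

lemma adj_cases [Finite V] (h : SpanningUnicycle G φ parent depth)
    (hcard : G.edgeSet.ncard = Nat.card V) (hab : G.Adj a b) :
    (∃ i, (a = φ i ∧ b = φ (i + 1)) ∨ (a = φ (i + 1) ∧ b = φ i)) ∨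
      (a ∉ univ.image φ ∧ b = parent a) ∨ (b ∉ univ.image φ ∧ a = parent b) := by
  have := Fintype.ofFinite V
  have hmem : s(a, b) ∈ G.edgeSet := hab
  rw [h.edgeSet_eq hcard, mem_coe, mem_union] at hmem
  obtain he | he := hmem
  · obtain ⟨i, -, he⟩ := mem_image.1 he
    have hi := Sym2.eq_iff.1 he
    exact .inl ⟨i, by grind⟩
  · obtain ⟨v, hv, he⟩ := mem_image.1 he
    have hvC := mem_compl.1 hv
    have hends := Sym2.eq_iff.1 he
    exact .inr (by grind)

lemma isInducedCycle [Finite V] (h : SpanningUnicycle G φ parent depth)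
    (hcard : G.edgeSet.ncard = Nat.card V) : IsInducedCycle G φ where
  injective := h.injective
  adj_iff a b := by
    constructor
    · intro hab
      obtain ⟨i, ⟨ha, hb⟩ | ⟨ha, hb⟩⟩ | ⟨ha, -⟩ | ⟨hb, -⟩ := h.adj_cases hcard hab
      · exact .inl (by rw [h.injective ha, h.injective hb])
      · exact .inr (by rw [h.injective ha, h.injective hb])
      · exact absurd (mem_image_of_mem φ (mem_univ a)) ha
      · exact absurd (mem_image_of_mem φ (mem_univ b)) hb
    · rintro (rfl | rfl)
      · exact h.adj_add_one a
      · exact (h.adj_add_one b).symm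

lemma two_lt_ncard_neighborSet_parent [Finite V] (h : SpanningUnicycle G φ parent depth)
    (hv : v ∉ univ.image φ) (hp : parent v ∈ univ.image φ) :
    2 < (G.neighborSet (parent v)).ncard := by
  obtain ⟨i, -, hi⟩ := mem_image.1 hp
  have ne_of_mem (i : ZMod n) : φ i ≠ v := fun hiv ↦ hv (hiv ▸ mem_image_of_mem φ (mem_univ i))
  have hne : φ (i - 1) ≠ φ (i + 1) := fun heq ↦
    h.two_ne_zero (by linear_combination -h.injective heq)
  have hprev := h.adj_add_one (i - 1)
  rw [sub_add_cancel, hi] at hprev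
  have hnext := hi ▸ h.adj_add_one i
  have hsub : (({φ (i - 1), φ (i + 1), v} : Finset V) : Set V) ⊆ G.neighborSet (parent v) := by
    simp only [coe_insert, coe_singleton, Set.insert_subset_iff, Set.singleton_subset_iff,
      SimpleGraph.mem_neighborSet]
    exact ⟨hprev.symm, hnext, (h.adj_parent v hv).symm⟩
  have hle := Set.ncard_le_ncard hsub
  rwa [Set.ncard_coe_finset,
    card_eq_three.2 ⟨_, _, _, hne, ne_of_mem _, ne_of_mem _, rfl⟩] at hle

lemma hangingForest [Finite V] (h : SpanningUnicycle G φ parent depth)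
    (hcard : G.edgeSet.ncard = Nat.card V)
    (hroot : ∀ i, 2 < (G.neighborSet (φ i)).ncard → φ i = φ 0) :
    HangingForest G (univ.image φ) (φ 0) parent depth where
  root_mem := mem_image_of_mem φ (mem_univ 0)
  adj_parent := h.adj_parent
  depth_parent_lt := h.depth_parent_lt
  adj_cases a b hab := by
    obtain ⟨i, ⟨rfl, rfl⟩ | ⟨rfl, rfl⟩⟩ | hpar := h.adj_cases hcard hab
    · exact .inl ⟨mem_image_of_mem φ (mem_univ _), mem_image_of_mem φ (mem_univ _)⟩
    · exact .inl ⟨mem_image_of_mem φ (mem_univ _), mem_image_of_mem φ (mem_univ _)⟩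
    · exact .inr hpar
  parent_eq_root v hv hp := by
    have hdeg := h.two_lt_ncard_neighborSet_parent hv hp
    obtain ⟨i, -, hi⟩ := mem_image.1 hp
    rw [← hi] at hdeg ⊢
    exact hroot i hdeg

end SpanningUnicycle

lemma IsPotted.exists_isInducedCycle_hangingForest [Finite V] [NeZero n] (hG : IsPotted G n) :
    ∃ φ : ZMod n → V, IsInducedCycle G φ ∧
      ∃ parent depth, HangingForest G (univ.image φ) (φ 0) parent depth := by
  obtain ⟨hconn, hcard, _, c, hc, hlen, u, ⟨hu, -⟩, huniq⟩ := hG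
  obtain ⟨φ, hφ₀, hinj, hsupport, hadj⟩ := exists_enumeration_of_isCycle (hc.rotate hu)
    ((c.length_rotate u hu).trans hlen)
  choose! parent hparent using fun v (hv : v ≠ u) ↦ exists_adj_dist_lt hconn hv
  have ne_root {v : V} (hv : v ∉ univ.image φ) : v ≠ u := fun h ↦
    hv (h ▸ hφ₀ ▸ mem_image_of_mem φ (mem_univ 0))
  have hspan : SpanningUnicycle G φ parent (G.dist · u) :=
    { two_lt := hlen ▸ hc.three_le_length
      injective := hinj
      adj_add_one := hadj
      adj_parent := fun v hv ↦ (hparent v (ne_root hv)).1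
      depth_parent_lt := fun v hv ↦ (hparent v (ne_root hv)).2 }
  refine ⟨φ, hspan.isInducedCycle hcard, parent, _, hspan.hangingForest hcard fun i hi ↦ ?_⟩
  rw [hφ₀]
  exact huniq _ ⟨(c.mem_support_rotate_iff u hu).1 (hsupport i), hi⟩

end Extraction

section Potted

open Finset

variable {G : SimpleGraph V} {j k N m m' : ℕ}

lemma PottedBound.anti (h : PottedBound j N m') (hm : m ≤ m') : PottedBound j N m :=
  ⟨fun q hq ↦ hm.trans (h.1 q hq), fun q hq ↦ hm.trans (h.2.1 q hq),
    fun q hq ↦ hm.trans (h.2.2 q hq)⟩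

lemma IsPotted.three_le (hG : IsPotted G k) : 3 ≤ k :=
  let ⟨_, _, _, _, hc, hlen, _⟩ := hG
  hlen ▸ hc.three_le_length

lemma IsPotted.pottedBound [Fintype V] (hG : IsPotted G (3 * j + 2))
    (hN : Fintype.card V = 3 * j + 2 + N) : PottedBound j N (numMaxDissoc G) := by
  have hj : 1 ≤ j := by
    have hthree := hG.three_le
    lia
  obtain ⟨φ, hφ, _, _, hF⟩ := hG.exists_isInducedCycle_hangingForest
  refine (hF.pottedBound (hφ.rootedCore hj hF) (hφ.exists_mem_minP3Covers hj) ?_).anti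
    (numMaxDissoc_le_card_minP3Covers G)
  rw [card_image_of_injective _ hφ.injective, card_univ, ZMod.card, hN]

lemma cast_cherryBound (j q : ℕ) :
    (cherryBound j q : ℚ) = max
      (((3 * j + 2 : ℕ) : ℚ) * 3 ^ q + (((3 * j + 2 : ℕ) : ℚ) + 1) / 3 *
        ((((3 * j + 2 + 3 * (q + 1) : ℕ) : ℚ) - (3 * j + 2 : ℕ)) / 3 + 1) + 1)
      ((((3 * j + 2 : ℕ) : ℚ) + 1) * 3 ^ q +
        (((3 * j + 2 + 3 * (q + 1) : ℕ) : ℚ) + (3 * j + 2 : ℕ) - 1) / 3) := by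
  rw [cherryBound]
  push_cast
  congr 1 <;> ring

lemma cast_quadBound (j q : ℕ) :
    (quadBound j q : ℚ) = max
      (((3 * j + 2 : ℕ) : ℚ) * 3 ^ q + (((3 * j + 2 : ℕ) : ℚ) + 1) / 3)
      ((((3 * j + 2 : ℕ) : ℚ) + 1) * 3 ^ q + 1) := by
  rw [quadBound]
  push_cast
  congr 1 <;> ring

end Potted

theorem potted_bound_k_mod3_eq_2 {V : Type*} [Fintype V] (G : SimpleGraph V) (n k : ℕ)
    (hn : Fintype.card V = n) (hk0 : 0 < k) (hk3 : 3 ≤ k) (hkmod : k % 3 = 2)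
    (hnk : k + 3 ≤ n) (hG : IsPotted G k) :
    (n % 3 = 0 → (numMaxDissoc G : ℚ) ≤
        max ((k : ℚ) * 3 ^ ((n - k - 1) / 3 - 1) + ((k : ℚ) + 1) / 3)
            (((k : ℚ) + 1) * 3 ^ ((n - k - 1) / 3 - 1) + 1)) ∧
    (n % 3 = 1 → (numMaxDissoc G : ℚ) ≤ ((k : ℚ) + 1) * 3 ^ ((n - k - 2) / 3 - 1)) ∧
    (n % 3 = 2 → (numMaxDissoc G : ℚ) ≤
        max ((k : ℚ) * 3 ^ ((n - k) / 3 - 1)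
              + ((k : ℚ) + 1) / 3 * (((n : ℚ) - k) / 3 + 1) + 1)
            (((k : ℚ) + 1) * 3 ^ ((n - k) / 3 - 1) + ((n : ℚ) + k - 1) / 3)) := by
  obtain ⟨j, rfl⟩ : ∃ j, k = 3 * j + 2 := ⟨k / 3, by lia⟩
  obtain ⟨N, rfl⟩ : ∃ N, n = 3 * j + 2 + N := ⟨n - (3 * j + 2), by lia⟩
  obtain ⟨hcherry, hquad, hlarge⟩ := hG.pottedBound hn
  rw [add_tsub_cancel_left]
  refine ⟨fun hmod ↦ ?_, fun hmod ↦ ?_, fun hmod ↦ ?_⟩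
  · obtain ⟨q, rfl⟩ : ∃ q, N = 3 * (q + 1) + 1 := ⟨N / 3 - 1, by lia⟩
    rw [show (3 * (q + 1) + 1 - 1) / 3 - 1 = q by lia, ← cast_quadBound]
    exact mod_cast hquad q rfl
  · obtain ⟨q, rfl⟩ : ∃ q, N = 3 * (q + 1) + 2 := ⟨N / 3 - 1, by lia⟩
    rw [show (3 * (q + 1) + 2 - 2) / 3 - 1 = q by lia]
    calc (numMaxDissoc G : ℚ) ≤ ((j + 1) * 3 ^ (q + 1) : ℕ) := mod_cast hlarge q rfl
      _ = _ := by push_cast; ring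
  · obtain ⟨q, rfl⟩ : ∃ q, N = 3 * (q + 1) := ⟨N / 3 - 1, by lia⟩
    rw [show 3 * (q + 1) / 3 - 1 = q by lia, ← cast_cherryBound]
    exact mod_cast hcherry q rfl
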